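/- arXiv:2411.15107 — 2 statements merged into one kernel-verified Lean document; each statement's English description precedes it below -/
import Mathlib

section
/- If M is a discrete complete pointed metric space (every singleton is open), then the Lipschitz-free space F(M) has property (V*). -/
open Filter Topology Metric Set

noncomputable section

/-- A formal series `∑ yₙ` in a normed space `Y` is weakly unconditionally Cauchy (WUC)
if `∑ |⟨φ, yₙ⟩| < ∞` for every continuous linear functional `φ` on `Y`. -/
def IsWUC {Y : Type*} [SeminormedAddCommGroup Y] [NormedSpace ℝ Y] (y : ℕ → Y) : Prop :=
  ∀ φ : Y →L[ℝ] ℝ, Summable fun n => |φ (y n)|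

/-- `Γ` is a (V*)-set in `X`: for every WUC series `∑ fₙ` in the dual `X*`,
`sup_{x ∈ Γ} |⟨x, fₙ⟩| → 0`. -/
def IsVStarSet {X : Type*} [SeminormedAddCommGroup X] [NormedSpace ℝ X] (Γ : Set X) : Prop :=
  ∀ f : ℕ → (X →L[ℝ] ℝ), IsWUC f →
    ∀ ε > (0 : ℝ), ∀ᶠ n in atTop, ∀ x ∈ Γ, |f n x| ≤ ε

/-- `Γ` is relatively weakly compact: its closure in the weak topology is compact. -/
def RelWeaklyCompact {X : Type*} [SeminormedAddCommGroup X] [NormedSpace ℝ X]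
    (Γ : Set X) : Prop :=
  IsCompact (closure ((toWeakSpace ℝ X) '' Γ))

/-- A normed space has Pełczyński's property (V*) if every (V*)-set is relatively
weakly compact. -/
def HasPropertyVStar (X : Type*) [SeminormedAddCommGroup X] [NormedSpace ℝ X] : Prop :=
  ∀ Γ : Set X, IsVStarSet Γ → RelWeaklyCompact Γ

/-- `F`, together with the map `δ : M → F`, is (a realization of) the Lipschitz-free space
over the pointed metric space `(M, o)`: `δ` is a base-point-preserving isometric embedding
whose range has dense linear span, and every Lipschitz function `f : M → ℝ` vanishing at
the base point lifts to a continuous linear functional of norm at most `Lip(f)` (this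
characterizes `F(M)`, with dual `Lip₀(M)`, up to isometric isomorphism). -/
structure IsLipschitzFree {M : Type*} [MetricSpace M] (o : M)
    {F : Type*} [NormedAddCommGroup F] [NormedSpace ℝ F] (δ : M → F) : Prop where
  isometry : Isometry δ
  map_base : δ o = 0
  dense_span : Dense (Submodule.span ℝ (Set.range δ) : Set F)
  lift : ∀ (L : NNReal) (f : M → ℝ), LipschitzWith L f → f o = 0 →
    ∃ φ : F →L[ℝ] ℝ, ‖φ‖ ≤ L ∧ ∀ x, φ (δ x) = f x

/-- The subspace of `F` corresponding to the Lipschitz-free space `F(S)` over a subset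
`S ⊆ M`: the closed linear span of `δ(S)`. -/
def freeSpan {M : Type*} [MetricSpace M] {F : Type*} [NormedAddCommGroup F]
    [NormedSpace ℝ F] (δ : M → F) (S : Set M) : Submodule ℝ F :=
  (Submodule.span ℝ (δ '' S)).topologicalClosure

theorem mem_freeSpan {M : Type*} [MetricSpace M] {F : Type*} [NormedAddCommGroup F]
    [NormedSpace ℝ F] (δ : M → F) {S : Set M} {x : M} (hx : x ∈ S) :
    δ x ∈ freeSpan δ S :=
  (Submodule.span ℝ (δ '' S)).le_topologicalClosure
    (Submodule.subset_span ⟨x, hx, rfl⟩)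

/-!
Lipschitz functions with uniformly bounded constants and pairwise disjoint supports form a WUC
series in the dual, so a gliding hump shows that a (V*)-set is uniformly small on functionals
vanishing on a large ball, or on a fixed neighbourhood of a suitable finite set. Multiplying by
cut-offs supported near such finite sets, at scales tending to zero and with summable errors, gives
a compact set `K` on whose annihilator the (V*)-set is small. Thus the (V*)-set lies within `ε` of
the free space of `K`; compact subsets of a discrete space are finite, so that free space is
finite-dimensional and the (V*)-set is even norm totally bounded.
-/

section NormedSpace

theorem tendsto_clm_apply_of_dense_span {ι 𝕜 X Y : Type*}
    [NontriviallyNormedField 𝕜] [SeminormedAddCommGroup X] [NormedSpace 𝕜 X]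
    [SeminormedAddCommGroup Y] [NormedSpace 𝕜 Y] {s : Set X}
    (hs : Dense (Submodule.span 𝕜 s : Set X)) {l : Filter ι} {φ : ι → X →L[𝕜] Y} {ψ : X →L[𝕜] Y}
    {C : ℝ} (hφ : ∀ i, ‖φ i‖ ≤ C) (h : ∀ x ∈ s, Tendsto (fun i => φ i x) l (𝓝 (ψ x))) (x : X) :
    Tendsto (fun i => φ i x) l (𝓝 (ψ x)) := by
  have hequi_iff : Equicontinuous ((↑) ∘ φ) ↔ ∃ C, ∀ i, ‖φ i‖ ≤ C :=
    (NormedSpace.equicontinuous_TFAE φ).out 1 5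
  have hequi := hequi_iff.2 ⟨C, hφ⟩
  refine (hequi.isClosed_setOfPred_tendsto ψ.continuous).closure_subset_iff.2 ?_ (hs x)
  intro v hv
  induction hv using Submodule.span_induction with
  | mem x hx => exact h x hx
  | zero => simpa using tendsto_const_nhds
  | add x y _ _ hx hy => simpa using hx.add hy
  | smul c x _ hx => simpa using hx.const_smul c

variable {X : Type*} [SeminormedAddCommGroup X] [NormedSpace ℝ X]

theorem isWUC_of_summable_norm {x : ℕ → X} (hx : Summable fun n => ‖x n‖) : IsWUC x := fun φ =>
  .of_nonneg_of_le (fun _ => abs_nonneg _) (fun n => φ.le_opNorm (x n)) (hx.mul_left ‖φ‖)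

theorem isWUC_of_norm_sum_smul_le {x : ℕ → X} {C : ℝ}
    (hx : ∀ (s : Finset ℕ) (c : ℕ → ℝ), (∀ n, |c n| ≤ 1) → ‖∑ n ∈ s, c n • x n‖ ≤ C) :
    IsWUC x := by
  intro φ
  refine summable_of_sum_le (c := ‖φ‖ * C) (fun _ => abs_nonneg _) fun s => ?_
  let σ : ℕ → ℝ := fun n => SignType.sign (φ (x n))
  have hσ : ∀ n, |σ n| ≤ 1 := fun n => by
    rcases h : SignType.sign (φ (x n)) with _ | _ | _ <;> simp [σ, h]
  calc ∑ n ∈ s, |φ (x n)| = φ (∑ n ∈ s, σ n • x n) := by simp [σ]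
    _ ≤ ‖φ‖ * ‖∑ n ∈ s, σ n • x n‖ := (le_abs_self _).trans (φ.le_opNorm _)
    _ ≤ ‖φ‖ * C := by gcongr; exact hx s σ hσ

theorem IsVStarSet.isBounded {Γ : Set X} (hΓ : IsVStarSet Γ) : Bornology.IsBounded Γ := by
  by_contra hunbdd
  have hlarge : ∀ n : ℕ, ∃ x ∈ Γ, (2 : ℝ) ^ n < ‖x‖ := by
    simpa [isBounded_iff_forall_norm_le] using fun n : ℕ => not_exists.1
      (mt isBounded_iff_forall_norm_le.2 hunbdd) (2 ^ n)
  choose x hxΓ hx using hlarge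
  choose g hg hgx using fun n => exists_dual_vector'' ℝ (x n)
  have hwuc : IsWUC fun n => (1 / 2 : ℝ) ^ n • g n := by
    refine isWUC_of_summable_norm (.of_nonneg_of_le (fun _ => norm_nonneg _) (fun n => ?_)
      summable_geometric_two)
    rw [norm_smul, Real.norm_of_nonneg (by positivity)]
    exact mul_le_of_le_one_right (by positivity) (hg n)
  obtain ⟨n, hn⟩ := (hΓ _ hwuc 1 one_pos).exists
  have hle : (1 / 2 : ℝ) ^ n * ‖x n‖ ≤ 1 := by
    simpa [hgx] using hn (x n) (hxΓ n)
  have hlt : 1 < (1 / 2 : ℝ) ^ n * ‖x n‖ := by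
    calc (1 : ℝ) = (1 / 2) ^ n * 2 ^ n := by rw [← mul_pow]; norm_num
      _ < (1 / 2) ^ n * ‖x n‖ := by gcongr; exact hx n
  exact hle.not_gt hlt

theorem mem_thickening_of_forall_dual_lt {𝕜 E : Type*} [RCLike 𝕜] [SeminormedAddCommGroup E]
    [NormedSpace 𝕜 E] (V : Submodule 𝕜 E) {x : E} {ε : ℝ}
    (h : ∀ φ : E →L[𝕜] 𝕜, ‖φ‖ ≤ 1 → (∀ v ∈ V, φ v = 0) → ‖φ x‖ < ε) :
    x ∈ thickening ε (V : Set E) := by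
  obtain ⟨g, hg, hgx⟩ := exists_dual_vector'' 𝕜 (V.mkQ x)
  have hlt : ‖g (V.mkQ x)‖ < ε := by
    refine h (g.comp V.mkQL) ?_ fun v hv => ?_
    · refine ContinuousLinearMap.opNorm_le_bound _ zero_le_one fun y => ?_
      exact (g.le_of_opNorm_le hg _).trans (by gcongr; exact Submodule.Quotient.norm_mk_le V y)
    · simp [(Submodule.Quotient.mk_eq_zero V).2 hv]
  rw [hgx, RCLike.norm_ofReal, abs_norm] at hlt
  rw [mem_thickening_iff_infDist_lt V.nonempty]
  exact (QuotientAddGroup.norm_mk (S := V.toAddSubgroup) x).symm.trans_lt hlt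

theorem totallyBounded_of_subset_thickening_finiteDimensional {E : Type*} [NormedAddCommGroup E]
    [NormedSpace ℝ E] {Γ : Set E} (hΓ : Bornology.IsBounded Γ)
    (h : ∀ ε > 0, ∃ V : Submodule ℝ E, FiniteDimensional ℝ V ∧ Γ ⊆ thickening ε (V : Set E)) :
    TotallyBounded Γ := by
  obtain ⟨B, hB⟩ := isBounded_iff_forall_norm_le.1 hΓ
  rw [Metric.totallyBounded_iff]
  intro ε hε
  obtain ⟨V, _, hΓV⟩ := h (ε / 2) (half_pos hε)
  have : ProperSpace V := FiniteDimensional.proper ℝ V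
  have hcompact : IsCompact ((↑) '' closedBall (0 : V) (B + ε / 2) : Set E) :=
    (isCompact_closedBall _ _).image continuous_subtype_val
  obtain ⟨t, ht, hcover⟩ := Metric.totallyBounded_iff.1 hcompact.totallyBounded (ε / 2)
    (half_pos hε)
  refine ⟨t, ht, fun x hx => ?_⟩
  obtain ⟨v, hv, hxv⟩ := mem_thickening_iff.1 (hΓV hx)
  have hvnorm : ‖v‖ ≤ B + ε / 2 := by
    rw [dist_comm, dist_eq_norm] at hxv
    linarith [norm_le_norm_add_norm_sub' v x, hB x hx]
  obtain ⟨y, hy, hvy⟩ := mem_iUnion₂.1 (hcover ⟨⟨v, hv⟩, by simpa using hvnorm, rfl⟩)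
  exact mem_biUnion hy (by linarith [dist_triangle x v y, mem_ball.1 hvy] : dist x y < ε)

theorem relWeaklyCompact_of_totallyBounded [CompleteSpace X] {Γ : Set X}
    (hΓ : TotallyBounded Γ) : RelWeaklyCompact Γ := by
  have hcompact : IsCompact (closure Γ) := hΓ.closure.isCompact_of_isClosed isClosed_closure
  exact (hcompact.image (toWeakSpaceCLM ℝ X).continuous).closure_of_subset
    (image_mono subset_closure)

end NormedSpace

section Kuratowski

variable {M : Type*} [PseudoMetricSpace M] [CompleteSpace M] {C : ℕ → Set M}

theorem isCompact_iInter_of_finite_cover (hclosed : ∀ j, IsClosed (C j))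
    (hcover : ∀ ε > 0, ∃ (j : ℕ) (t : Set M), t.Finite ∧ C j ⊆ ⋃ y ∈ t, ball y ε) :
    IsCompact (⋂ j, C j) := by
  refine TotallyBounded.isCompact_of_isClosed (Metric.totallyBounded_iff.2 fun ε hε => ?_)
    (isClosed_iInter hclosed)
  obtain ⟨j, t, ht, hCt⟩ := hcover ε hε
  exact ⟨t, ht, (iInter_subset C j).trans hCt⟩

theorem exists_iInter_lt_subset_of_isOpen (hclosed : ∀ j, IsClosed (C j))
    (hcover : ∀ ε > 0, ∃ (j : ℕ) (t : Set M), t.Finite ∧ C j ⊆ ⋃ y ∈ t, ball y ε)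
    {U : Set M} (hU : IsOpen U) (hCU : ⋂ j, C j ⊆ U) : ∃ n, ⋂ j < n, C j ⊆ U := by
  by_contra! hcon
  choose x hxC hxU using fun n => not_subset.1 (hcon n)
  have hmem : ∀ j n, j < n → x n ∈ C j := fun j n hjn => mem_iInter₂.1 (hxC n) j hjn
  have htb : TotallyBounded (range x) := by
    refine Metric.totallyBounded_iff.2 fun ε hε => ?_
    obtain ⟨j, t, ht, hCt⟩ := hcover ε hε
    refine ⟨t ∪ x '' Iic j, ht.union ((finite_Iic j).image x), ?_⟩
    rintro _ ⟨n, rfl⟩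
    rcases le_or_gt n j with hnj | hjn
    · exact mem_biUnion (Or.inr ⟨n, hnj, rfl⟩) (mem_ball_self hε)
    · exact biUnion_subset_biUnion_left subset_union_left (hCt (hmem j n hjn))
  obtain ⟨a, -, s, hs, hlim⟩ := (htb.closure.isCompact_of_isClosed isClosed_closure).tendsto_subseq
    fun n => subset_closure (mem_range_self n)
  have haC : ∀ j, a ∈ C j := fun j => (hclosed j).mem_of_tendsto hlim <|
    (hs.tendsto_atTop.eventually_gt_atTop j).mono fun n => hmem j (s n)
  exact hU.isClosed_compl.mem_of_tendsto hlim (.of_forall fun n => hxU (s n))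
    (hCU (mem_iInter.2 haC))

end Kuratowski

section Cutoff

variable {M F : Type*} [NormedAddCommGroup F] [NormedSpace ℝ F] {δ : M → F}

/-- `IsCutoff δ A B φ ψ` says that, as Lipschitz functions on `M`, `ψ = h φ` for some weight
`h : M → [0, 1]` equal to `1` on `A` and to `0` off `B`. The weight is recorded only through its
pointwise effect. -/
structure IsCutoff (δ : M → F) (A B : Set M) (φ ψ : F →L[ℝ] ℝ) : Prop where
  eq_on : ∀ x ∈ A, ψ (δ x) = φ (δ x)
  eq_zero_off : ∀ x ∉ B, ψ (δ x) = 0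
  exists_mul : ∀ x, ∃ t ∈ Icc (0 : ℝ) 1, ψ (δ x) = t * φ (δ x)

namespace IsCutoff

variable {A A' B B' : Set M} {φ ψ : F →L[ℝ] ℝ}

theorem mono (h : IsCutoff δ A B φ ψ) (hA : A' ⊆ A) (hB : B ⊆ B') : IsCutoff δ A' B' φ ψ where
  eq_on x hx := h.eq_on x (hA hx)
  eq_zero_off x hx := h.eq_zero_off x fun hxB => hx (hB hxB)
  exists_mul := h.exists_mul

theorem apply_eq_zero (h : IsCutoff δ A B φ ψ) {x : M} (hx : φ (δ x) = 0) : ψ (δ x) = 0 := by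
  obtain ⟨t, -, ht⟩ := h.exists_mul x
  rw [ht, hx, mul_zero]

theorem abs_apply_le (h : IsCutoff δ A B φ ψ) (x : M) : |ψ (δ x)| ≤ |φ (δ x)| := by
  obtain ⟨t, ⟨ht0, ht1⟩, ht⟩ := h.exists_mul x
  rw [ht, abs_mul, abs_of_nonneg ht0]
  exact mul_le_of_le_one_left (abs_nonneg _) ht1

theorem abs_sub_apply_le (h : IsCutoff δ A B φ ψ) (x : M) : |(φ - ψ) (δ x)| ≤ |φ (δ x)| := by
  obtain ⟨t, ⟨ht0, ht1⟩, ht⟩ := h.exists_mul x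
  have hmul : (φ - ψ) (δ x) = (1 - t) * φ (δ x) := by rw [sub_apply, ht]; ring
  rw [hmul, abs_mul, abs_of_nonneg (by linarith)]
  exact mul_le_of_le_one_left (abs_nonneg _) (by linarith)

theorem sub_apply_eq_zero (h : IsCutoff δ A B φ ψ) {x : M} (hx : x ∈ A) : (φ - ψ) (δ x) = 0 := by
  rw [sub_apply, h.eq_on x hx, sub_self]

end IsCutoff

end Cutoff

section LipschitzFree

variable {M : Type*} [MetricSpace M] {o : M} {F : Type*} [NormedAddCommGroup F]
  [NormedSpace ℝ F] {δ : M → F}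

namespace IsLipschitzFree

theorem dual_ext (hδ : IsLipschitzFree o δ) {φ ψ : F →L[ℝ] ℝ} (h : ∀ x, φ (δ x) = ψ (δ x)) :
    φ = ψ :=
  ContinuousLinearMap.ext_on hδ.dense_span (forall_mem_range.2 h)

theorem lipschitzWith_dual (hδ : IsLipschitzFree o δ) (φ : F →L[ℝ] ℝ) :
    LipschitzWith ‖φ‖₊ fun x => φ (δ x) := by
  simpa using! φ.lipschitz.comp hδ.isometry.lipschitz

theorem abs_dual_sub_le (hδ : IsLipschitzFree o δ) (φ : F →L[ℝ] ℝ) (x y : M) :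
    |φ (δ x) - φ (δ y)| ≤ ‖φ‖ * dist x y :=
  (hδ.lipschitzWith_dual φ).dist_le_mul x y

theorem abs_dual_le (hδ : IsLipschitzFree o δ) (φ : F →L[ℝ] ℝ) (x : M) :
    |φ (δ x)| ≤ ‖φ‖ * dist x o := by
  simpa [hδ.map_base] using hδ.abs_dual_sub_le φ x o

theorem exists_dual (hδ : IsLipschitzFree o δ) {L : ℝ} (hL : 0 ≤ L) {f : M → ℝ}
    (hf : ∀ x y, |f x - f y| ≤ L * dist x y) (h0 : f o = 0) :
    ∃ φ : F →L[ℝ] ℝ, ‖φ‖ ≤ L ∧ ∀ x, φ (δ x) = f x :=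
  hδ.lift ⟨L, hL⟩ f (.of_dist_le_mul hf) h0

theorem norm_le_of_abs_sub_le (hδ : IsLipschitzFree o δ) {L : ℝ} (hL : 0 ≤ L) {φ : F →L[ℝ] ℝ}
    (hφ : ∀ x y, |φ (δ x) - φ (δ y)| ≤ L * dist x y) : ‖φ‖ ≤ L := by
  obtain ⟨ψ, hψ, hψφ⟩ := hδ.exists_dual hL hφ (by simp [hδ.map_base])
  rwa [← hδ.dual_ext hψφ]

theorem tendsto_dual_apply (hδ : IsLipschitzFree o δ) {ι : Type*} {l : Filter ι}
    {φ : ι → F →L[ℝ] ℝ} {ψ : F →L[ℝ] ℝ} {C : ℝ} (hφ : ∀ i, ‖φ i‖ ≤ C)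
    (h : ∀ x, Tendsto (fun i => φ i (δ x)) l (𝓝 (ψ (δ x)))) (μ : F) :
    Tendsto (fun i => φ i μ) l (𝓝 (ψ μ)) :=
  tendsto_clm_apply_of_dense_span hδ.dense_span hφ (forall_mem_range.2 h) μ

-- At each of two points at most one of the `f n` is nonzero, so at most two summands contribute.
theorem norm_sum_smul_le_of_disjoint_support (hδ : IsLipschitzFree o δ) {L : ℝ} (hL : 0 ≤ L)
    {ι : Type*} {f : ι → F →L[ℝ] ℝ} (hf : ∀ n, ‖f n‖ ≤ L)
    (hdisj : Pairwise (Function.onFun Disjoint fun n => Function.support fun x => f n (δ x)))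
    (s : Finset ι) {c : ι → ℝ} (hc : ∀ n, |c n| ≤ 1) : ‖∑ n ∈ s, c n • f n‖ ≤ 2 * L := by
  classical
  refine hδ.norm_le_of_abs_sub_le (by positivity) fun x y => ?_
  let g : ι → ℝ := fun n => c n * (f n (δ x) - f n (δ y))
  have hg : ∀ n, |g n| ≤ L * dist x y := fun n => by
    calc |g n| = |c n| * |f n (δ x) - f n (δ y)| := abs_mul _ _
      _ ≤ 1 * (‖f n‖ * dist x y) := by gcongr; exacts [hc n, hδ.abs_dual_sub_le (f n) x y]
      _ ≤ L * dist x y := by rw [one_mul]; gcongr; exact hf n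
  have hcard_one : ∀ z, (s.filter fun n => f n (δ z) ≠ 0).card ≤ 1 := fun z =>
    Finset.card_le_one.2 fun m hm n hn => by
      by_contra hmn
      exact disjoint_left.1 (hdisj hmn) (Finset.mem_filter.1 hm).2 (Finset.mem_filter.1 hn).2
  let t := (s.filter fun n => f n (δ x) ≠ 0) ∪ s.filter fun n => f n (δ y) ≠ 0
  have hcard : t.card ≤ 2 :=
    (Finset.card_union_le _ _).trans (add_le_add (hcard_one x) (hcard_one y))
  have hsum : ∑ n ∈ t, g n = ∑ n ∈ s, g n := by
    refine Finset.sum_subset (by simp [t, Finset.union_subset_iff]) fun n hn hnt => ?_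
    have hzero : f n (δ x) = 0 ∧ f n (δ y) = 0 := by simpa [t, hn] using hnt
    simp [g, hzero]
  calc |(∑ n ∈ s, c n • f n) (δ x) - (∑ n ∈ s, c n • f n) (δ y)|
      = |∑ n ∈ t, g n| := by rw [hsum]; simp [g, mul_sub]
    _ ≤ ∑ n ∈ t, |g n| := Finset.abs_sum_le_sum_abs _ _
    _ ≤ t.card • (L * dist x y) := Finset.sum_le_card_nsmul _ _ _ fun n _ => hg n
    _ ≤ 2 • (L * dist x y) := by gcongr
    _ = 2 * L * dist x y := by rw [nsmul_eq_mul]; push_cast; ring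

theorem isWUC_of_disjoint_support (hδ : IsLipschitzFree o δ) {L : ℝ} {f : ℕ → F →L[ℝ] ℝ}
    (hf : ∀ n, ‖f n‖ ≤ L)
    (hdisj : Pairwise (Function.onFun Disjoint fun n => Function.support fun x => f n (δ x))) :
    IsWUC f :=
  isWUC_of_norm_sum_smul_le fun s _ =>
    hδ.norm_sum_smul_le_of_disjoint_support ((norm_nonneg _).trans (hf 0)) hf hdisj s

theorem exists_dual_mul (hδ : IsLipschitzFree o δ) {K R : ℝ} (hK : 0 ≤ K) (hR : 0 ≤ R)
    (φ : F →L[ℝ] ℝ) {h : M → ℝ} (h01 : ∀ x, h x ∈ Icc 0 1) (hh : ∀ x y, |h x - h y| ≤ K * dist x y)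
    (hφ : ∀ x, h x ≠ 0 → |φ (δ x)| ≤ R) :
    ∃ ψ : F →L[ℝ] ℝ, ‖ψ‖ ≤ ‖φ‖ + R * K ∧ ∀ x, ψ (δ x) = h x * φ (δ x) := by
  refine hδ.exists_dual (by positivity) (fun x y => ?_) (by simp [hδ.map_base])
  wlog hx : h x ≠ 0 generalizing x y
  · by_cases hy : h y = 0
    · simp only [not_not.1 hx, hy, zero_mul, sub_self, abs_zero]; positivity
    · rw [abs_sub_comm, dist_comm]; exact this y x hy
  calc |h x * φ (δ x) - h y * φ (δ y)|
      = |h y * (φ (δ x) - φ (δ y)) + φ (δ x) * (h x - h y)| := by ring_nf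
    _ ≤ |h y| * |φ (δ x) - φ (δ y)| + |φ (δ x)| * |h x - h y| := by
      simpa only [abs_mul] using abs_add_le (h y * (φ (δ x) - φ (δ y))) (φ (δ x) * (h x - h y))
    _ ≤ 1 * (‖φ‖ * dist x y) + R * (K * dist x y) := by
      rw [abs_of_nonneg (h01 y).1]
      gcongr
      exacts [(h01 y).2, hδ.abs_dual_sub_le φ x y, hφ x hx, hh x y]
    _ = (‖φ‖ + R * K) * dist x y := by ring

theorem exists_dual_eq_zero_on_thickening (hδ : IsLipschitzFree o δ) {φ : F →L[ℝ] ℝ} {K : Set M}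
    (hφ : ∀ x ∈ K, φ (δ x) = 0) {s : ℝ} (hs : 0 ≤ s) :
    ∃ ψ : F →L[ℝ] ℝ, ‖ψ‖ ≤ ‖φ‖ ∧ (∀ x ∈ thickening s K, ψ (δ x) = 0) ∧
      ∀ x, |ψ (δ x) - φ (δ x)| ≤ ‖φ‖ * s := by
  let t := ‖φ‖ * s
  have ht : 0 ≤ t := by positivity
  let trunc : ℝ → ℝ := fun u => max (u - t) (min 0 (u + t))
  have htrunc_zero : ∀ u, |u| ≤ t → trunc u = 0 := fun u hu => by
    obtain ⟨hl, hr⟩ := abs_le.1 hu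
    simp only [trunc]
    rw [min_eq_left (by linarith), max_eq_right (by linarith)]
  have htrunc_lip : LipschitzWith 1 trunc := by
    simpa [trunc] using! (LipschitzWith.id.sub (.const t)).max
      ((LipschitzWith.id.add (.const t)).const_min 0)
  have htrunc_sub : ∀ u, |trunc u - u| ≤ t := fun u => by
    simp only [trunc]; grind
  have hlip := htrunc_lip.comp (hδ.lipschitzWith_dual φ)
  rw [one_mul] at hlip
  obtain ⟨ψ, hψ, hψx⟩ := hδ.lift ‖φ‖₊ _ hlip
    (by simpa [hδ.map_base] using htrunc_zero 0 (by simpa using ht))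
  refine ⟨ψ, hψ, fun x hx => ?_, fun x => by rw [hψx]; exact htrunc_sub _⟩
  obtain ⟨y, hy, hxy⟩ := mem_thickening_iff.1 hx
  rw [hψx]
  refine htrunc_zero _ ?_
  calc |φ (δ x)| = |φ (δ x) - φ (δ y)| := by rw [hφ y hy, sub_zero]
    _ ≤ ‖φ‖ * dist x y := hδ.abs_dual_sub_le φ x y
    _ ≤ t := by simp only [t]; gcongr

theorem abs_apply_le_of_forall_thickening (hδ : IsLipschitzFree o δ) {φ : F →L[ℝ] ℝ} {K : Set M}
    (hφ : ∀ x ∈ K, φ (δ x) = 0) {μ : F} {ε : ℝ}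
    (h : ∀ ψ : F →L[ℝ] ℝ, ‖ψ‖ ≤ ‖φ‖ → ∀ s > 0, (∀ x ∈ thickening s K, ψ (δ x) = 0) →
      |ψ μ| ≤ ε) : |φ μ| ≤ ε := by
  choose ψ hψ hψK hψφ using fun n : ℕ =>
    hδ.exists_dual_eq_zero_on_thickening hφ (s := 1 / ((n : ℝ) + 1)) (by positivity)
  have hlim : Tendsto (fun n => ψ n μ) atTop (𝓝 (φ μ)) := by
    refine hδ.tendsto_dual_apply hψ (fun x => tendsto_iff_dist_tendsto_zero.2 ?_) μ
    refine squeeze_zero (fun _ => dist_nonneg) (fun n => hψφ n x) ?_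
    simpa using tendsto_one_div_add_atTop_nhds_zero_nat.const_mul ‖φ‖
  exact le_of_tendsto' hlim.abs fun n => h (ψ n) (hψ n) _ (by positivity) (hψK n)

theorem exists_isCutoff_thickening (hδ : IsLipschitzFree o δ) {r R : ℝ} (hr : 0 < r) (hR : 0 ≤ R)
    {φ : F →L[ℝ] ℝ} {A : Set M} (hφ : ∀ x ∈ thickening r A, |φ (δ x)| ≤ R) :
    ∃ ψ : F →L[ℝ] ℝ, ‖ψ‖ ≤ ‖φ‖ + R / r ∧ IsCutoff δ A (thickening r A) φ ψ := by
  let h : M → ℝ := fun x => thickenedIndicator hr A x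
  have h01 : ∀ x, h x ∈ Icc 0 1 := fun x =>
    ⟨NNReal.coe_nonneg _, NNReal.coe_le_one.2 (thickenedIndicator_le_one hr A x)⟩
  have hone : ∀ x ∈ A, h x = 1 := fun x hx =>
    NNReal.coe_eq_one.2 (thickenedIndicator_one hr A hx)
  have hzero : ∀ x ∉ thickening r A, h x = 0 := fun x hx =>
    NNReal.coe_eq_zero.2 (thickenedIndicator_zero hr A hx)
  have hlip : ∀ x y, |h x - h y| ≤ r⁻¹ * dist x y := fun x y => by
    simpa only [NNReal.dist_eq, NNReal.coe_inv, Real.coe_toNNReal _ hr.le] using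
      (lipschitzWith_thickenedIndicator hr A).dist_le_mul x y
  obtain ⟨ψ, hψ, hψx⟩ := hδ.exists_dual_mul (by positivity) hR φ h01 hlip
    fun x hx => hφ x (not_imp_comm.1 (hzero x) hx)
  exact ⟨ψ, hψ, fun x hx => by rw [hψx, hone x hx, one_mul],
    fun x hx => by rw [hψx, hzero x hx, zero_mul], fun x => ⟨h x, h01 x, hψx x⟩⟩

theorem exists_isCutoff_closedBall (hδ : IsLipschitzFree o δ) {r : ℝ} (hr : 0 < r)
    (φ : F →L[ℝ] ℝ) :
    ∃ ψ : F →L[ℝ] ℝ, ‖ψ‖ ≤ 3 * ‖φ‖ ∧ IsCutoff δ (closedBall o r) (closedBall o (2 * r)) φ ψ := by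
  have hball : thickening r (closedBall o r) ⊆ closedBall o (2 * r) := by
    intro x hx
    obtain ⟨y, hy, hxy⟩ := mem_thickening_iff.1 hx
    rw [mem_closedBall] at hy ⊢
    linarith [dist_triangle x y o]
  have hbound : ∀ x ∈ thickening r (closedBall o r), |φ (δ x)| ≤ ‖φ‖ * (2 * r) := fun x hx =>
    (hδ.abs_dual_le φ x).trans (by gcongr; exact hball hx)
  obtain ⟨ψ, hψ, hcut⟩ := hδ.exists_isCutoff_thickening hr (by positivity) hbound
  refine ⟨ψ, hψ.trans_eq ?_, hcut.mono subset_rfl hball⟩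
  field_simp
  ring

end IsLipschitzFree

namespace IsVStarSet

variable {Γ : Set F} {L R ε : ℝ}

-- Otherwise one glides along the `S i`, producing disjointly supported functionals, hence a WUC
-- series in the dual, none of which is uniformly small on `Γ`.
theorem exists_forall_annulus_abs_le (hδ : IsLipschitzFree o δ) (hΓ : IsVStarSet Γ) (hε : 0 < ε)
    {ι : Type*} [Preorder ι] [Nonempty ι] {S : ι → Set M} (hS : Monotone S) (L : ℝ) :
    ∃ i, ∀ j ≥ i, ∀ ψ : F →L[ℝ] ℝ, ‖ψ‖ ≤ L → (∀ x ∈ S i, ψ (δ x) = 0) →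
      (∀ x ∉ S j, ψ (δ x) = 0) → ∀ μ ∈ Γ, |ψ μ| ≤ ε := by
  by_contra! hcon
  choose next hnext ψ hψ hin hout μ hμ hlt using hcon
  let i : ℕ → ι := fun n => next^[n] (Classical.arbitrary ι)
  have hi_succ : ∀ n, i (n + 1) = next (i n) := fun n => Function.iterate_succ_apply' _ _ _
  have hi : Monotone i := monotone_nat_of_le_succ fun n => (hi_succ n).symm ▸ hnext (i n)
  have hdisj : Pairwise (Function.onFun Disjoint fun n =>
      Function.support fun x => ψ (i n) (δ x)) := by
    refine (pairwise_disjoint_on _).2 fun m n hmn => disjoint_left.2 fun x hxm hxn => ?_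
    have hx : x ∈ S (i (m + 1)) := by
      rw [hi_succ]
      exact not_imp_comm.1 (hout (i m) x) hxm
    exact hxn (hin (i n) x (hS (hi hmn) hx))
  obtain ⟨n, hn⟩ := (hΓ _ (hδ.isWUC_of_disjoint_support (fun n => hψ (i n)) hdisj) ε hε).exists
  exact (hlt (i n)).not_ge (hn _ (hμ (i n)))

theorem exists_forall_abs_le_of_isCutoff (hδ : IsLipschitzFree o δ) (hΓ : IsVStarSet Γ)
    (hε : 0 < ε) {ι : Type*} [Preorder ι] [Nonempty ι] {S : ι → Set M} (hS : Monotone S)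
    {Φ : Set (F →L[ℝ] ℝ)} (hcut : ∀ i, ∀ φ ∈ Φ, ∀ E : Finset M, ∃ j ≥ i, ∃ ψ : F →L[ℝ] ℝ,
      ‖ψ‖ ≤ L ∧ IsCutoff δ E (S j) φ ψ) :
    ∃ i, ∀ φ ∈ Φ, (∀ x ∈ S i, φ (δ x) = 0) → ∀ μ ∈ Γ, |φ μ| ≤ ε := by
  obtain ⟨i, hi⟩ := hΓ.exists_forall_annulus_abs_le hδ hε hS L
  refine ⟨i, fun φ hφ hφS μ hμ => ?_⟩
  choose j hj ψ hψ hcutoff using hcut i φ hφ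
  have hlim : Tendsto (fun E => ψ E μ) atTop (𝓝 (φ μ)) := by
    refine hδ.tendsto_dual_apply hψ (fun x => tendsto_const_nhds.congr' ?_) μ
    filter_upwards [eventually_ge_atTop {x}] with E hE
    exact ((hcutoff E).eq_on x (hE (Finset.mem_singleton_self x))).symm
  exact le_of_tendsto' hlim.abs fun E => hi (j E) (hj E) (ψ E) (hψ E)
    (fun x hx => (hcutoff E).apply_eq_zero (hφS x hx)) (hcutoff E).eq_zero_off μ hμ

theorem exists_closedBall_forall_abs_le (hδ : IsLipschitzFree o δ) (hΓ : IsVStarSet Γ)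
    (hε : 0 < ε) (L : ℝ) :
    ∃ r > 0, ∀ φ : F →L[ℝ] ℝ, ‖φ‖ ≤ L → (∀ x ∈ closedBall o r, φ (δ x) = 0) →
      ∀ μ ∈ Γ, |φ μ| ≤ ε := by
  have hcut : ∀ r, ∀ φ ∈ {φ : F →L[ℝ] ℝ | ‖φ‖ ≤ L}, ∀ E : Finset M, ∃ r' ≥ r, ∃ ψ : F →L[ℝ] ℝ,
      ‖ψ‖ ≤ 3 * L ∧ IsCutoff δ E (closedBall o r') φ ψ := fun r φ hφ E => by
    obtain ⟨b, hb⟩ := (isBounded_iff_subset_closedBall o).1 E.finite_toSet.isBounded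
    let r' := max (max r b) 1
    have hr' : 0 < r' := by positivity
    obtain ⟨ψ, hψ, hcut⟩ := hδ.exists_isCutoff_closedBall hr' φ
    refine ⟨2 * r', by grind, ψ, hψ.trans (by gcongr; exact hφ), hcut.mono ?_ subset_rfl⟩
    exact hb.trans (closedBall_subset_closedBall (by grind))
  obtain ⟨r, hr⟩ := hΓ.exists_forall_abs_le_of_isCutoff hδ hε
    (fun _ _ => closedBall_subset_closedBall) hcut
  exact ⟨max r 1, by positivity, fun φ hφ hφr => hr φ hφ fun x hx =>
    hφr x (closedBall_subset_closedBall (le_max_left r 1) hx)⟩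

theorem exists_finset_forall_abs_le (hδ : IsLipschitzFree o δ) (hΓ : IsVStarSet Γ) (hε : 0 < ε)
    (L : ℝ) (hR : 0 ≤ R) {r : ℝ} (hr : 0 < r) :
    ∃ E : Finset M, ∀ φ : F →L[ℝ] ℝ, ‖φ‖ ≤ L → (∀ x, |φ (δ x)| ≤ R) →
      (∀ x ∈ thickening r (E : Set M), φ (δ x) = 0) → ∀ μ ∈ Γ, |φ μ| ≤ ε := by
  classical
  have hcut : ∀ E₀ : Finset M, ∀ φ ∈ {φ : F →L[ℝ] ℝ | ‖φ‖ ≤ L ∧ ∀ x, |φ (δ x)| ≤ R},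
      ∀ E : Finset M, ∃ E₁ ≥ E₀, ∃ ψ : F →L[ℝ] ℝ,
        ‖ψ‖ ≤ L + R / r ∧ IsCutoff δ E (thickening r (E₁ : Set M)) φ ψ := by
    rintro E₀ φ ⟨hφL, hφR⟩ E
    obtain ⟨ψ, hψ, hcut⟩ := hδ.exists_isCutoff_thickening hr hR (A := (E₀ ∪ E : Finset M))
      fun x _ => hφR x
    exact ⟨E₀ ∪ E, Finset.subset_union_left, ψ, hψ.trans (by gcongr),
      hcut.mono (Finset.coe_subset.2 Finset.subset_union_right) subset_rfl⟩
  obtain ⟨E, hE⟩ := hΓ.exists_forall_abs_le_of_isCutoff hδ hε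
    (fun _ _ h => thickening_subset_of_subset r (Finset.coe_subset.2 h)) hcut
  exact ⟨E, fun φ hφL hφR => hE φ ⟨hφL, hφR⟩⟩

theorem exists_isCutoff_closedBall_sub_le (hδ : IsLipschitzFree o δ) (hΓ : IsVStarSet Γ)
    (hε : 0 < ε) (L : ℝ) :
    ∃ r > 0, ∀ φ : F →L[ℝ] ℝ, ‖φ‖ ≤ L → ∃ ψ : F →L[ℝ] ℝ, ‖ψ‖ ≤ 3 * L ∧
      IsCutoff δ (closedBall o r) (closedBall o (2 * r)) φ ψ ∧ ∀ μ ∈ Γ, |(φ - ψ) μ| ≤ ε := by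
  obtain ⟨r, hr, hsmall⟩ := hΓ.exists_closedBall_forall_abs_le hδ hε (L + 3 * L)
  refine ⟨r, hr, fun φ hφ => ?_⟩
  obtain ⟨ψ, hψ, hcut⟩ := hδ.exists_isCutoff_closedBall hr φ
  have hψL : ‖ψ‖ ≤ 3 * L := hψ.trans (by gcongr)
  exact ⟨ψ, hψL, hcut, hsmall (φ - ψ) ((norm_sub_le _ _).trans (add_le_add hφ hψL))
    fun x hx => hcut.sub_apply_eq_zero hx⟩

theorem exists_isCutoff_thickening_sub_le (hδ : IsLipschitzFree o δ) (hΓ : IsVStarSet Γ)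
    (hε : 0 < ε) (L : ℝ) (hR : 0 ≤ R) {r : ℝ} (hr : 0 < r) :
    ∃ E : Finset M, ∀ φ : F →L[ℝ] ℝ, ‖φ‖ ≤ L → (∀ x, |φ (δ x)| ≤ R) →
      ∃ ψ : F →L[ℝ] ℝ, ‖ψ‖ ≤ L + R / r ∧
        IsCutoff δ (thickening r E) (cthickening (2 * r) E) φ ψ ∧ ∀ μ ∈ Γ, |(φ - ψ) μ| ≤ ε := by
  obtain ⟨E, hE⟩ := hΓ.exists_finset_forall_abs_le hδ hε (L + (L + R / r)) hR hr
  refine ⟨E, fun φ hφL hφR => ?_⟩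
  obtain ⟨ψ, hψ, hcut⟩ := hδ.exists_isCutoff_thickening hr hR (A := thickening r (E : Set M))
    fun x _ => hφR x
  have hψL : ‖ψ‖ ≤ L + R / r := hψ.trans (by gcongr)
  have hsub : thickening r (thickening r (E : Set M)) ⊆ cthickening (2 * r) E := by
    rw [two_mul]
    exact (thickening_thickening_subset r r _).trans (thickening_subset_cthickening _ _)
  exact ⟨ψ, hψL, hcut.mono subset_rfl hsub, hE (φ - ψ)
    ((norm_sub_le _ _).trans (add_le_add hφL hψL))
    (fun x => (hcut.abs_sub_apply_le x).trans (hφR x)) fun x hx => hcut.sub_apply_eq_zero hx⟩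

-- Successive cut-offs around finite sets `E n` cost `ε / 2 ^ (n + 1)` each, so the total error does
-- not depend on how many are made, although the norms of the results do.
theorem exists_seq_finset_forall_abs_le (hδ : IsLipschitzFree o δ) (hΓ : IsVStarSet Γ)
    (hε : 0 < ε) (L : ℝ) (hR : 0 ≤ R) {r : ℕ → ℝ} (hr : ∀ n, 0 < r n) :
    ∃ E : ℕ → Finset M, ∀ (n : ℕ) (φ : F →L[ℝ] ℝ), ‖φ‖ ≤ L → (∀ x, |φ (δ x)| ≤ R) →
      (∀ x ∈ ⋂ j < n, cthickening (2 * r j) (E j : Set M), φ (δ x) = 0) →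
        ∀ μ ∈ Γ, |φ μ| ≤ ε := by
  let b : ℕ → ℝ := fun n => L + ∑ j ∈ Finset.range n, R / r j
  have hb : ∀ n, b (n + 1) = b n + R / r n := fun n => by
    simp only [b, Finset.sum_range_succ, add_assoc]
  choose E hE using fun n => hΓ.exists_isCutoff_thickening_sub_le hδ
    (show 0 < ε * (1 / 2) ^ (n + 1) by positivity) (b n) hR (hr n)
  refine ⟨E, fun n φ hφL hφR hφ μ hμ => ?_⟩
  have hiter : ∀ n, ∃ χ : F →L[ℝ] ℝ, ‖χ‖ ≤ b n ∧ (∀ x, |χ (δ x)| ≤ |φ (δ x)|) ∧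
      (∀ x ∉ ⋂ j < n, cthickening (2 * r j) (E j : Set M), χ (δ x) = 0) ∧
      |(φ - χ) μ| ≤ ε * (1 - (1 / 2) ^ n) := by
    intro n
    induction n with
    | zero => exact ⟨φ, by simpa [b] using hφL, fun _ => le_rfl, by simp, by simp⟩
    | succ n ih =>
      obtain ⟨χ, hχb, hχφ, hχ0, hχμ⟩ := ih
      obtain ⟨χ', hχ'b, hcut, hχ'μ⟩ := hE n χ hχb fun x => (hχφ x).trans (hφR x)
      refine ⟨χ', hχ'b.trans_eq (hb n).symm, fun x => (hcut.abs_apply_le x).trans (hχφ x),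
        fun x hx => ?_, ?_⟩
      · rw [biInter_lt_succ, mem_inter_iff, not_and_or] at hx
        exact hx.elim (fun hx => hcut.apply_eq_zero (hχ0 x hx)) (hcut.eq_zero_off x)
      · calc |(φ - χ') μ| = |(φ - χ) μ + (χ - χ') μ| := by simp
          _ ≤ |(φ - χ) μ| + |(χ - χ') μ| := abs_add_le _ _
          _ ≤ ε * (1 - (1 / 2) ^ n) + ε * (1 / 2) ^ (n + 1) := add_le_add hχμ (hχ'μ μ hμ)
          _ = ε * (1 - (1 / 2) ^ (n + 1)) := by ring
  obtain ⟨χ, -, hχφ, hχ0, hχμ⟩ := hiter n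
  have hχ : χ = 0 := hδ.dual_ext fun x => by
    by_cases hx : x ∈ ⋂ j < n, cthickening (2 * r j) (E j : Set M)
    · simpa [hφ x hx] using hχφ x
    · exact hχ0 x hx
  rw [hχ, sub_zero] at hχμ
  exact hχμ.trans (mul_le_of_le_one_right hε.le (sub_le_self _ (by positivity)))

theorem exists_isCompact_forall_abs_le [CompleteSpace M] (hδ : IsLipschitzFree o δ)
    (hΓ : IsVStarSet Γ) (hε : 0 < ε) :
    ∃ K : Set M, IsCompact K ∧ ∀ φ : F →L[ℝ] ℝ, ‖φ‖ ≤ 1 → (∀ x ∈ K, φ (δ x) = 0) →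
      ∀ μ ∈ Γ, |φ μ| ≤ ε := by
  obtain ⟨ρ, hρ, hball⟩ := hΓ.exists_isCutoff_closedBall_sub_le hδ (half_pos hε) 1
  let r : ℕ → ℝ := fun n => 1 / (n + 1)
  obtain ⟨E, hE⟩ := hΓ.exists_seq_finset_forall_abs_le hδ (half_pos hε) (3 * 1)
    (show 0 ≤ 2 * ρ by positivity) (r := r) fun n => by positivity
  let C : ℕ → Set M := fun j => cthickening (2 * r j) (E j : Set M)
  have hclosed : ∀ j, IsClosed (C j) := fun j => isClosed_cthickening
  have hr : Tendsto (fun n => 2 * r n) atTop (𝓝 0) := by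
    simpa [r] using tendsto_one_div_add_atTop_nhds_zero_nat.const_mul (2 : ℝ)
  have hcover : ∀ η > 0, ∃ (j : ℕ) (t : Set M), t.Finite ∧ C j ⊆ ⋃ y ∈ t, ball y η := by
    intro η hη
    obtain ⟨j, hj⟩ := (hr.eventually_lt_const hη).exists
    exact ⟨j, E j, (E j).finite_toSet,
      (cthickening_subset_thickening' hη hj _).trans_eq thickening_eq_biUnion_ball⟩
  refine ⟨⋂ j, C j, isCompact_iInter_of_finite_cover hclosed hcover, fun φ hφ hφK μ hμ => ?_⟩
  refine hδ.abs_apply_le_of_forall_thickening hφK fun φ' hφ' s hs hφ's => ?_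
  obtain ⟨n, hn⟩ := exists_iInter_lt_subset_of_isOpen hclosed hcover isOpen_thickening
    (self_subset_thickening hs _)
  have hφ'1 : ‖φ'‖ ≤ 1 := hφ'.trans hφ
  obtain ⟨ψ, hψ, hcut, hψμ⟩ := hball φ' hφ'1
  have hψR : ∀ x, |ψ (δ x)| ≤ 2 * ρ := fun x => by
    by_cases hx : x ∈ closedBall o (2 * ρ)
    · calc |ψ (δ x)| ≤ |φ' (δ x)| := hcut.abs_apply_le x
        _ ≤ ‖φ'‖ * dist x o := hδ.abs_dual_le φ' x
        _ ≤ 1 * (2 * ρ) := by gcongr; exact hx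
        _ = 2 * ρ := one_mul _
    · rw [hcut.eq_zero_off x hx, abs_zero]; positivity
  have hψε : |ψ μ| ≤ ε / 2 :=
    hE n ψ hψ hψR (fun x hx => hcut.apply_eq_zero (hφ's x (hn hx))) μ hμ
  calc |φ' μ| = |(φ' - ψ) μ + ψ μ| := by simp
    _ ≤ |(φ' - ψ) μ| + |ψ μ| := abs_add_le _ _
    _ ≤ ε := by linarith [hψμ μ hμ]

end IsVStarSet

/-- A subset `Γ` of a Lipschitz-free space over `M` is tight if, up to an arbitrarily small error
in norm, it is contained in the free space of a compact subset of `M`. -/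
def IsTight (δ : M → F) (Γ : Set F) : Prop :=
  ∀ ε > 0, ∃ K : Set M, IsCompact K ∧ Γ ⊆ thickening ε (freeSpan δ K : Set F)

theorem IsVStarSet.isTight [CompleteSpace M] (hδ : IsLipschitzFree o δ) {Γ : Set F}
    (hΓ : IsVStarSet Γ) : IsTight δ Γ := by
  intro ε hε
  obtain ⟨K, hK, hsmall⟩ := hΓ.exists_isCompact_forall_abs_le hδ (half_pos hε)
  refine ⟨K, hK, fun μ hμ => mem_thickening_of_forall_dual_lt _ fun φ hφ hφK => ?_⟩
  exact (hsmall φ hφ (fun x hx => hφK _ (mem_freeSpan δ hx)) μ hμ).trans_lt (half_lt_self hε)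

theorem finiteDimensional_freeSpan (δ : M → F) {K : Set M} (hK : K.Finite) :
    FiniteDimensional ℝ (freeSpan δ K) := by
  have : FiniteDimensional ℝ (Submodule.span ℝ (δ '' K)) := .span_of_finite ℝ (hK.image δ)
  rwa [freeSpan, (Submodule.closed_of_finiteDimensional _).submodule_topologicalClosure_eq]

theorem IsTight.totallyBounded [DiscreteTopology M] {Γ : Set F} (hΓ : IsTight δ Γ)
    (hbdd : Bornology.IsBounded Γ) : TotallyBounded Γ := by
  refine totallyBounded_of_subset_thickening_finiteDimensional hbdd fun ε hε => ?_
  obtain ⟨K, hK, hΓK⟩ := hΓ ε hε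
  exact ⟨freeSpan δ K, finiteDimensional_freeSpan δ (isCompact_iff_finite.1 hK), hΓK⟩

theorem propertyVStar_of_discrete_general [CompleteSpace M] [DiscreteTopology M]
    (hδ : IsLipschitzFree o δ) {Γ : Set F} (hΓ : IsVStarSet Γ) : TotallyBounded Γ :=
  (hΓ.isTight hδ).totallyBounded hΓ.isBounded

end LipschitzFree

/-- If `M` is a discrete complete pointed metric space (every singleton is open), then
the Lipschitz-free space `F(M)` has property (V*). -/
theorem propertyVStar_of_discrete
    {M : Type*} [MetricSpace M] [CompleteSpace M]
    (hdisc : ∀ x : M, IsOpen ({x} : Set M)) (o : M)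
    {F : Type*} [NormedAddCommGroup F] [NormedSpace ℝ F] [CompleteSpace F]
    (δ : M → F) (hδ : IsLipschitzFree o δ) :
    HasPropertyVStar F := by
  have : DiscreteTopology M := discreteTopology_iff_isOpen_singleton.2 hdisc
  exact fun Γ hΓ =>
    relWeaklyCompact_of_totallyBounded (propertyVStar_of_discrete_general hδ hΓ)
end
end

section
/- Let M be a complete pointed metric space satisfying: for every compact set K ⊂ M and every subset Γ ⊂ F(K), if Γ is a (V*)-set with respect to F(cl(U)) for every open set U ⊃ K, then Γ is a (V*)-set with respect to F(L) for some compact L ⊃ K. Then property (V*) is compactly determined for F(M): if F(K∪{0}) has property (V*) for every compact K ⊂ M, then F(M) has property (V*). -/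
open Filter Topology Metric Set

noncomputable section

/-- `Γ ⊆ F` is a (V*)-set with respect to the (closed) subspace `S` of `F`: `Γ` is
contained in `S` and the corresponding subset of `S` is a (V*)-set in `S`. -/
def IsVStarSetWithin {F : Type*} [NormedAddCommGroup F] [NormedSpace ℝ F]
    (Γ : Set F) (S : Submodule ℝ F) : Prop :=
  Γ ⊆ (S : Set F) ∧ IsVStarSet {y : ↥S | (y : F) ∈ Γ}

/-
A (V*)-set `Γ ⊆ F(M)` is, up to any `ε > 0`, carried by a relative neighbourhood of a finite set:
otherwise one could pick functionals on `F(M)` with pairwise disjoint supports, all of them large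
somewhere on `Γ`, and these form a WUC series because a sum of uniformly Lipschitz functions with
disjoint supports is Lipschitz. Multiplying by cutoff functions on such neighbourhoods, with radii
tending to `0` and geometrically decreasing errors, one obtains in the limit a set `Γ'` that
approximates `Γ` and is carried by a compact set `K`. As a uniform limit of images of `Γ` under
operators with values in `F(cl(U))`, it is a (V*)-set there for every open `U ⊇ K`, so the
localization hypothesis and property (V*) over compact sets make it relatively weakly compact.
By Grothendieck's lemma so is `Γ`, since it is approximated by such sets within every `ε`.
-/

section VStarSets

variable {X Y : Type*} [SeminormedAddCommGroup Y] [NormedSpace ℝ Y]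

theorem isWUC_of_norm_sum_smul_le_s11 {y : ℕ → Y} {C : ℝ}
    (h : ∀ s : ℕ → ℝ, (∀ n, |s n| ≤ 1) → ∀ N, ‖∑ n ∈ Finset.range N, s n • y n‖ ≤ C) :
    IsWUC y := by
  intro φ
  refine summable_of_sum_range_le (c := ‖φ‖ * C) (fun _ => abs_nonneg _) fun N => ?_
  have abs_sign_le : ∀ n, |(SignType.sign (φ (y n)) : ℝ)| ≤ 1 := fun n => by
    rcases lt_trichotomy (φ (y n)) 0 with h | h | h <;> simp [h]
  calc ∑ n ∈ Finset.range N, |φ (y n)|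
      = φ (∑ n ∈ Finset.range N, (SignType.sign (φ (y n)) : ℝ) • y n) := by
        simp only [map_sum, map_smul, smul_eq_mul, sign_mul_self]
    _ ≤ ‖φ‖ * ‖∑ n ∈ Finset.range N, (SignType.sign (φ (y n)) : ℝ) • y n‖ :=
        (le_abs_self _).trans (φ.le_opNorm _)
    _ ≤ ‖φ‖ * C := by
        gcongr
        exact h _ abs_sign_le N

theorem IsVStarSet.image_clm [SeminormedAddCommGroup X] [NormedSpace ℝ X] {Γ : Set X}
    (hΓ : IsVStarSet Γ) (T : X →L[ℝ] Y) : IsVStarSet (T '' Γ) := by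
  intro f hf ε hε
  have isWUC_comp : IsWUC fun n => (f n).comp T := fun φ =>
    hf (φ.comp ((ContinuousLinearMap.compL ℝ X Y ℝ).flip T))
  filter_upwards [hΓ _ isWUC_comp ε hε] with n hn
  rintro _ ⟨x, hx, rfl⟩
  exact hn x hx

variable [SeminormedAddCommGroup X] [NormedSpace ℝ X] [CompleteSpace X]

theorem IsWUC.exists_norm_le {f : ℕ → X →L[ℝ] ℝ} (hf : IsWUC f) : ∃ C, ∀ n, ‖f n‖ ≤ C :=
  banach_steinhaus fun x =>
    ⟨∑' n, |f n x|, fun n =>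
      (hf (ContinuousLinearMap.apply ℝ ℝ x)).le_tsum n fun _ _ => abs_nonneg _⟩

theorem IsVStarSet.of_forall_subset_thickening {Γ : Set X}
    (h : ∀ ε > 0, ∃ Γ', IsVStarSet Γ' ∧ Γ ⊆ thickening ε Γ') : IsVStarSet Γ := by
  intro f hf ε hε
  obtain ⟨C, hC⟩ := hf.exists_norm_le
  have hC0 : 0 ≤ C := (norm_nonneg _).trans (hC 0)
  obtain ⟨Γ', hΓ', hΓΓ'⟩ := h (ε / 2 / (C + 1)) (by positivity)
  filter_upwards [hΓ' f hf (ε / 2) (by positivity)] with n hn x hx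
  obtain ⟨y, hy, hxy⟩ := mem_thickening_iff.1 (hΓΓ' hx)
  rw [dist_eq_norm] at hxy
  calc |f n x| = |f n (x - y) + f n y| := by rw [map_sub, sub_add_cancel]
    _ ≤ |f n (x - y)| + |f n y| := abs_add_le _ _
    _ ≤ (C + 1) * (ε / 2 / (C + 1)) + ε / 2 := by
        refine add_le_add (((f n).le_of_opNorm_le ((hC n).trans (lt_add_one C).le) _).trans ?_)
          (hn y hy)
        gcongr
    _ = ε := by field_simp; ring

theorem IsVStarSet.isVStarSetWithin_image_of_tendstoUniformlyOn {X : Type*}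
    [NormedAddCommGroup X] [NormedSpace ℝ X] [CompleteSpace X] {Γ : Set X} (hΓ : IsVStarSet Γ)
    {S : Submodule ℝ X} (hS : IsClosed (S : Set X)) {T : ℕ → X →L[ℝ] X} {τ : X → X}
    (hT : TendstoUniformlyOn (fun k => ⇑(T k)) τ atTop Γ) (hTS : ∀ᶠ k in atTop, ∀ x, T k x ∈ S) :
    IsVStarSetWithin (τ '' Γ) S := by
  have : CompleteSpace S := hS.completeSpace_coe
  refine ⟨?_, .of_forall_subset_thickening fun ε hε => ?_⟩
  · rintro _ ⟨x, hx, rfl⟩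
    exact hS.mem_of_tendsto (hT.tendsto_at hx) (hTS.mono fun k hk => hk x)
  · obtain ⟨k, hk, hkS⟩ := ((Metric.tendstoUniformlyOn_iff.1 hT ε hε).and hTS).exists
    refine ⟨_, hΓ.image_clm ((T k).codRestrict S hkS), ?_⟩
    rintro y ⟨x, hx, hxy⟩
    refine mem_thickening_iff.2 ⟨_, mem_image_of_mem _ hx, ?_⟩
    rw [Subtype.dist_eq, ← hxy]
    exact hk x hx

end VStarSets

section WeakCompactness

variable {X Y : Type*}

theorem RelWeaklyCompact.image_clm [SeminormedAddCommGroup X] [NormedSpace ℝ X]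
    [NormedAddCommGroup Y] [NormedSpace ℝ Y] {Γ : Set X} (hΓ : RelWeaklyCompact Γ)
    (T : X →L[ℝ] Y) : RelWeaklyCompact (T '' Γ) := by
  refine (hΓ.image (WeakSpace.map T).continuous).closure_of_subset ?_
  rintro _ ⟨_, ⟨x, hx, rfl⟩, rfl⟩
  exact ⟨_, subset_closure ⟨x, hx, rfl⟩, rfl⟩

variable [NormedAddCommGroup X] [NormedSpace ℝ X]

theorem IsVStarSetWithin.relWeaklyCompact {Γ : Set X} {S : Submodule ℝ X}
    (hΓ : IsVStarSetWithin Γ S) (hS : HasPropertyVStar S) : RelWeaklyCompact Γ := by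
  convert (hS _ hΓ.2).image_clm S.subtypeL
  exact (image_preimage_eq_of_subset (by simpa using hΓ.1)).symm

open NormedSpace Pointwise in
theorem RelWeaklyCompact.isCompact_image_add_closedBall {Γ : Set X} (hΓ : RelWeaklyCompact Γ)
    (ε : ℝ) :
    IsCompact (inclusionInDoubleDualWeak ℝ X '' closure (toWeakSpace ℝ X '' Γ) +
      WeakDual.toStrongDual ⁻¹' closedBall (0 : StrongDual ℝ (StrongDual ℝ X)) ε) :=
  (hΓ.image (inclusionInDoubleDualWeak ℝ X).continuous).add (WeakDual.isCompact_closedBall _ _)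

open NormedSpace Pointwise in
theorem RelWeaklyCompact.closure_image_subset_add_closedBall {Γ Γ' : Set X} {ε : ℝ}
    (hΓ' : RelWeaklyCompact Γ') (hΓΓ' : Γ ⊆ thickening ε Γ') :
    closure (inclusionInDoubleDualWeak ℝ X '' (toWeakSpace ℝ X '' Γ)) ⊆
      inclusionInDoubleDualWeak ℝ X '' closure (toWeakSpace ℝ X '' Γ') +
        WeakDual.toStrongDual ⁻¹' closedBall (0 : StrongDual ℝ (StrongDual ℝ X)) ε := by
  refine closure_minimal ?_ (hΓ'.isCompact_image_add_closedBall ε).isClosed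
  rintro _ ⟨_, ⟨x, hx, rfl⟩, rfl⟩
  obtain ⟨y, hy, hxy⟩ := mem_thickening_iff.1 (hΓΓ' hx)
  refine ⟨_, ⟨_, subset_closure ⟨y, hy, rfl⟩, rfl⟩,
    inclusionInDoubleDualWeak ℝ X (toWeakSpace ℝ X (x - y)), ?_, ?_⟩
  · refine (mem_closedBall_zero_iff (E := StrongDual ℝ (StrongDual ℝ X))).2 ?_
    exact (double_dual_bound ℝ X (x - y)).trans (dist_eq_norm x y ▸ hxy.le)
  · simp only [map_sub, add_sub_cancel]

open NormedSpace in
theorem closure_image_subset_range_inclusionInDoubleDualWeak [CompleteSpace X] {Γ : Set X}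
    (h : ∀ ε > 0, ∃ Γ', RelWeaklyCompact Γ' ∧ Γ ⊆ thickening ε Γ') :
    closure (inclusionInDoubleDualWeak ℝ X '' (toWeakSpace ℝ X '' Γ)) ⊆
      range (inclusionInDoubleDualWeak ℝ X) := by
  intro z hz
  have isClosed_range : IsClosed (range (inclusionInDoubleDualLi (E := X) ℝ)) :=
    (inclusionInDoubleDualLi (E := X) ℝ).isometry.isUniformInducing.isComplete_range.isClosed
  have mem_range : WeakDual.toStrongDual z ∈ range (inclusionInDoubleDualLi (E := X) ℝ) := by
    refine isClosed_range.closure_subset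
      ((Metric.mem_closure_iff (α := StrongDual ℝ (StrongDual ℝ X))).2 fun ε hε => ?_)
    obtain ⟨Γ', hΓ', hΓΓ'⟩ := h (ε / 2) (half_pos hε)
    obtain ⟨_, ⟨y, -, rfl⟩, b, hb, rfl⟩ := hΓ'.closure_image_subset_add_closedBall hΓΓ' hz
    refine ⟨_, mem_range_self ((toWeakSpace ℝ X).symm y), ?_⟩
    calc dist (WeakDual.toStrongDual (inclusionInDoubleDualWeak ℝ X y + b))
          (inclusionInDoubleDualLi ℝ ((toWeakSpace ℝ X).symm y))
        = ‖WeakDual.toStrongDual b‖ :=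
          (dist_eq_norm (E := StrongDual ℝ (StrongDual ℝ X)) _ _).trans
            (congrArg _ (add_sub_cancel_left (G := StrongDual ℝ (StrongDual ℝ X)) _ _))
      _ ≤ ε / 2 := (mem_closedBall_zero_iff (E := StrongDual ℝ (StrongDual ℝ X))).1 hb
      _ < ε := half_lt_self hε
  obtain ⟨x, hx⟩ := mem_range
  exact ⟨toWeakSpace ℝ X x, hx⟩

-- Grothendieck: the weak-* closure of `Γ` in the bidual is compact and stays within every `ε` of
-- the norm-closed subspace `X`.
open NormedSpace in
theorem relWeaklyCompact_of_forall_subset_thickening [CompleteSpace X] {Γ : Set X}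
    (h : ∀ ε > 0, ∃ Γ', RelWeaklyCompact Γ' ∧ Γ ⊆ thickening ε Γ') : RelWeaklyCompact Γ := by
  obtain ⟨Γ', hΓ', hΓΓ'⟩ := h 1 one_pos
  have isEmbedding := isEmbedding_inclusionInDoubleDualWeak ℝ X
  rw [RelWeaklyCompact, isEmbedding.closure_eq_preimage_closure_image]
  exact isEmbedding.isCompact_preimage'
    ((hΓ'.isCompact_image_add_closedBall 1).of_isClosed_subset isClosed_closure
      (hΓ'.closure_image_subset_add_closedBall hΓΓ'))
    (closure_image_subset_range_inclusionInDoubleDualWeak h)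

end WeakCompactness

section NormedSpaces

theorem exists_tendstoUniformlyOn_of_dist_le_geometric_two {α E : Type*} [PseudoMetricSpace E]
    [CompleteSpace E] [Nonempty E] {f : ℕ → α → E} {s : Set α} {C : ℝ}
    (h : ∀ x ∈ s, ∀ k, dist (f k x) (f (k + 1) x) ≤ C / 2 / 2 ^ k) :
    ∃ g, TendstoUniformlyOn f g atTop s ∧ ∀ x ∈ s, dist (f 0 x) (g x) ≤ C := by
  have exists_lim : ∀ x ∈ s, ∃ y, Tendsto (fun k => f k x) atTop (𝓝 y) := fun x hx =>
    cauchySeq_tendsto_of_complete (cauchySeq_of_le_geometric_two (h x hx))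
  choose! g hg using exists_lim
  refine ⟨g, Metric.tendstoUniformlyOn_iff.2 fun ε hε => ?_, fun x hx =>
    dist_le_of_le_geometric_two_of_tendsto₀ (h x hx) (hg x hx)⟩
  have tendsto_zero : Tendsto (fun k : ℕ => C / 2 ^ k) atTop (𝓝 0) :=
    tendsto_const_nhds.div_atTop (tendsto_pow_atTop_atTop_of_one_lt one_lt_two)
  filter_upwards [tendsto_zero.eventually_lt_const hε] with k hk x hx
  rw [dist_comm]
  exact (dist_le_of_le_geometric_two_of_tendsto (h x hx) (hg x hx) k).trans_lt hk

theorem mem_submodule_of_forall_dual_eq_zero {X : Type*} [SeminormedAddCommGroup X]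
    [NormedSpace ℝ X] {S : Submodule ℝ X} (hS : IsClosed (S : Set X)) {x : X}
    (h : ∀ f : X →L[ℝ] ℝ, (∀ y ∈ S, f y = 0) → f x = 0) : x ∈ S := by
  rw [← Submodule.Quotient.mk_eq_zero]
  refine SeparatingDual.eq_zero_of_forall_dual_eq_zero (R := ℝ) fun g => ?_
  refine h (g.comp S.mkQL) fun y hy => ?_
  simp [(Submodule.Quotient.mk_eq_zero S).2 hy]

end NormedSpaces

section Kuratowski

variable {M : Type*} [PseudoMetricSpace M] {N : ℕ → Set M}

theorem totallyBounded_iInf_principal_of_subset_thickening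
    (hN : ∀ ε > 0, ∃ k, ∃ t : Set M, t.Finite ∧ N k ⊆ thickening ε t) :
    (⨅ k, 𝓟 (N k)).TotallyBounded := by
  rw [uniformity_basis_dist.filter_totallyBounded_iff]
  intro ε hε
  obtain ⟨k, t, ht, hNt⟩ := hN ε hε
  refine ⟨t, ht, mem_iInf_of_mem k (mem_principal.2 fun x hx => ?_)⟩
  simpa [mem_thickening_iff, SetRel.preimage] using hNt hx

variable [CompleteSpace M]

theorem nonempty_iInter_of_subset_thickening (hanti : Antitone N) (hclosed : ∀ k, IsClosed (N k))
    (hN : ∀ ε > 0, ∃ k, ∃ t : Set M, t.Finite ∧ N k ⊆ thickening ε t)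
    (hne : ∀ k, (N k).Nonempty) : (⋂ k, N k).Nonempty := by
  have : (⨅ k, 𝓟 (N k)).NeBot :=
    iInf_neBot_of_directed' (Antitone.directed_ge fun _ _ h => principal_mono.2 (hanti h))
      fun k => principal_neBot_iff.2 (hne k)
  obtain ⟨x, hx⟩ := (totallyBounded_iInf_principal_of_subset_thickening hN).exists_clusterPt
  refine ⟨x, mem_iInter.2 fun k => ?_⟩
  exact (hclosed k).closure_subset (mem_closure_iff_clusterPt.2 (hx.mono (iInf_le _ k)))

theorem isCompact_iInter_of_subset_thickening (hclosed : ∀ k, IsClosed (N k))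
    (hN : ∀ ε > 0, ∃ k, ∃ t : Set M, t.Finite ∧ N k ⊆ thickening ε t) :
    IsCompact (⋂ k, N k) := by
  refine TotallyBounded.isCompact_of_isClosed (Metric.totallyBounded_iff.2 fun ε hε => ?_)
    (isClosed_iInter hclosed)
  obtain ⟨k, t, ht, hNt⟩ := hN ε hε
  exact ⟨t, ht, (iInter_subset N k).trans (hNt.trans thickening_eq_biUnion_ball.subset)⟩

theorem exists_subset_of_iInter_subset_of_isOpen (hanti : Antitone N)
    (hclosed : ∀ k, IsClosed (N k))
    (hN : ∀ ε > 0, ∃ k, ∃ t : Set M, t.Finite ∧ N k ⊆ thickening ε t) {U : Set M}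
    (hU : IsOpen U) (hNU : (⋂ k, N k) ⊆ U) : ∃ k, N k ⊆ U := by
  by_contra! hcon
  obtain ⟨x, hx⟩ := nonempty_iInter_of_subset_thickening (N := fun k => N k ∩ Uᶜ)
    (fun k l hkl => inter_subset_inter_left _ (hanti hkl))
    (fun k => (hclosed k).inter hU.isClosed_compl)
    (fun ε hε => (hN ε hε).imp fun k ⟨t, ht, hNt⟩ => ⟨t, ht, inter_subset_left.trans hNt⟩)
    (fun k => not_subset.1 (hcon k))
  rw [← iInter_inter] at hx
  exact hx.2 (hNU hx.1)

end Kuratowski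

section LipschitzSums

theorem lipschitzWith_sum_of_disjoint_support {ι M E : Type*} [PseudoMetricSpace M]
    [SeminormedAddCommGroup E] {C : NNReal} {g : ι → M → E} (hg : ∀ i, LipschitzWith C (g i))
    (hdisj : Pairwise fun i j => Disjoint (Function.support (g i)) (Function.support (g j)))
    (s : Finset ι) : LipschitzWith (2 * C) fun x => ∑ i ∈ s, g i x := by
  classical
  have card_le_one : ∀ x, (s.filter fun i => g i x ≠ 0).card ≤ 1 := fun x =>
    Finset.card_le_one.2 fun i hi j hj => hdisj.eq <|
      not_disjoint_iff.2 ⟨x, (Finset.mem_filter.1 hi).2, (Finset.mem_filter.1 hj).2⟩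
  refine LipschitzWith.of_dist_le_mul fun x y => ?_
  let A := (s.filter fun i => g i x ≠ 0) ∪ s.filter fun i => g i y ≠ 0
  have card_A_le : A.card ≤ 2 :=
    (Finset.card_union_le _ _).trans (add_le_add (card_le_one x) (card_le_one y))
  have hA : A ⊆ s := Finset.union_subset (Finset.filter_subset _ _) (Finset.filter_subset _ _)
  have eq_zero_of_notMem : ∀ i ∈ s, i ∉ A → g i x = 0 ∧ g i y = 0 := fun i hi hiA => by
    simpa [A, hi] using hiA
  calc dist (∑ i ∈ s, g i x) (∑ i ∈ s, g i y)
      = dist (∑ i ∈ A, g i x) (∑ i ∈ A, g i y) := by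
        rw [Finset.sum_subset hA fun i hi hiA => (eq_zero_of_notMem i hi hiA).1,
          Finset.sum_subset hA fun i hi hiA => (eq_zero_of_notMem i hi hiA).2]
    _ ≤ ∑ i ∈ A, dist (g i x) (g i y) := dist_sum_sum_le _ _ _
    _ ≤ ∑ _ ∈ A, C * dist x y := Finset.sum_le_sum fun i _ => (hg i).dist_le_mul x y
    _ = A.card * (C * dist x y) := by rw [Finset.sum_const, nsmul_eq_mul]
    _ ≤ 2 * (C * dist x y) := by gcongr; exact_mod_cast card_A_le
    _ = ↑(2 * C) * dist x y := by push_cast; ring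

end LipschitzSums

section RelativeDistance

variable {M : Type*} [PseudoMetricSpace M] {o : M} {E : Set M}

/-- The distance from `x` to `E` relative to the scale `1 + dist x o`. Functions of it are better
multipliers than functions of `infDist x E`: their slope at `x` decays like the inverse of
`dist x o`, which compensates for the growth of a Lipschitz function there. -/
def relInfDist (o : M) (E : Set M) (x : M) : ℝ :=
  infDist x E / (1 + dist x o)

theorem relInfDist_nonneg (x : M) : 0 ≤ relInfDist o E x :=
  div_nonneg infDist_nonneg (by positivity)

theorem relInfDist_of_mem {x : M} (hx : x ∈ E) : relInfDist o E x = 0 := by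
  rw [relInfDist, infDist_zero_of_mem hx, zero_div]

theorem relInfDist_le_one (ho : o ∈ E) (x : M) : relInfDist o E x ≤ 1 :=
  (div_le_one (by positivity)).2 ((infDist_le_dist_of_mem ho).trans (by linarith))

theorem relInfDist_anti {E' : Set M} (hE : E.Nonempty) (h : E ⊆ E') (x : M) :
    relInfDist o E' x ≤ relInfDist o E x :=
  div_le_div_of_nonneg_right (infDist_le_infDist_of_subset h hE) (by positivity)

theorem infDist_eq_relInfDist_mul (x : M) :
    infDist x E = relInfDist o E x * (1 + dist x o) :=
  (div_mul_cancel₀ _ (by positivity)).symm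

theorem continuous_relInfDist (o : M) (E : Set M) : Continuous (relInfDist o E) :=
  (continuous_infDist_pt E).div (by fun_prop) fun x => by positivity

theorem abs_relInfDist_sub_mul_le (ho : o ∈ E) (x y : M) :
    |relInfDist o E x - relInfDist o E y| * (1 + dist x o) ≤ 2 * dist x y := by
  have abs_infDist_sub_le : |infDist x E - infDist y E| ≤ dist x y := by
    simpa [Real.dist_eq] using (lipschitz_infDist_pt E).dist_le_mul x y
  calc |relInfDist o E x - relInfDist o E y| * (1 + dist x o)
      = |(relInfDist o E x - relInfDist o E y) * (1 + dist x o)| := by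
        rw [abs_mul, abs_of_pos (show 0 < 1 + dist x o by positivity)]
    _ = |(infDist x E - infDist y E) + relInfDist o E y * (dist y o - dist x o)| := by
        rw [infDist_eq_relInfDist_mul (o := o) x, infDist_eq_relInfDist_mul (o := o) y]
        ring_nf
    _ ≤ |infDist x E - infDist y E| + relInfDist o E y * |dist y o - dist x o| :=
        (abs_add_le _ _).trans_eq (by rw [abs_mul, abs_of_nonneg (relInfDist_nonneg y)])
    _ ≤ dist x y + 1 * dist x y := by
        gcongr
        · exact relInfDist_le_one ho y
        · exact dist_comm x y ▸ abs_dist_sub_le y x o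
    _ = 2 * dist x y := by ring

/-- The points at relative distance at most `r` from `E`. These sets, in which the width of the
neighbourhood grows linearly with the distance to `o`, replace the metric neighbourhoods of `E`:
they support multipliers that are bounded on the Lipschitz-free space. -/
def relNbhd (o : M) (E : Set M) (r : ℝ) : Set M :=
  {x | relInfDist o E x ≤ r}

theorem isClosed_relNbhd (o : M) (E : Set M) (r : ℝ) : IsClosed (relNbhd o E r) :=
  isClosed_le (continuous_relInfDist o E) continuous_const

theorem relNbhd_mono {E' : Set M} (hE : E.Nonempty) (h : E ⊆ E') (r : ℝ) :
    relNbhd o E r ⊆ relNbhd o E' r := fun x hx => (relInfDist_anti hE h x).trans hx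

theorem isBounded_relNbhd (ho : o ∈ E) (hE : Bornology.IsBounded E) {r : ℝ} (hr : r < 1) :
    Bornology.IsBounded (relNbhd o E r) := by
  refine (isBounded_iff_subset_closedBall o).2 ⟨(1 + diam E) / (1 - r), fun x hx => ?_⟩
  have dist_le : dist x o ≤ infDist x E + diam E := dist_le_infDist_add_diam hE ho
  have infDist_le : infDist x E ≤ r * (1 + dist x o) :=
    (infDist_eq_relInfDist_mul (o := o) x).trans_le (by gcongr; exact hx)
  rw [mem_closedBall, le_div_iff₀ (sub_pos.2 hr)]
  linarith

theorem relNbhd_inter_closedBall_subset_thickening (hE : E.Nonempty) {r R ε : ℝ} (hr : 0 ≤ r)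
    (hε : r * (1 + R) < ε) : relNbhd o E r ∩ closedBall o R ⊆ thickening ε E := by
  rintro x ⟨hx, hxR⟩
  rw [mem_thickening_iff_infDist_lt hE, infDist_eq_relInfDist_mul (o := o)]
  refine lt_of_le_of_lt ?_ hε
  gcongr
  exacts [hx, hxR]

/-- The intersection of the first `k` of the sets `relNbhd o (A j) (ρ j)`. When the `A j` are finite
and `ρ` tends to `0`, these sets decrease to a compact set. -/
def iInterRelNbhd (o : M) (A : ℕ → Finset M) (ρ : ℕ → ℝ) (k : ℕ) : Set M :=
  ⋂ j < k, relNbhd o (A j) (ρ j)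

theorem antitone_iInterRelNbhd (o : M) (A : ℕ → Finset M) (ρ : ℕ → ℝ) :
    Antitone (iInterRelNbhd o A ρ) := fun _ _ hkl =>
  biInter_mono (fun _ hj => lt_of_lt_of_le hj hkl) fun _ _ => Subset.rfl

theorem isClosed_iInterRelNbhd (o : M) (A : ℕ → Finset M) (ρ : ℕ → ℝ) (k : ℕ) :
    IsClosed (iInterRelNbhd o A ρ k) :=
  isClosed_biInter fun _ _ => isClosed_relNbhd _ _ _

theorem exists_iInterRelNbhd_subset_thickening {A : ℕ → Finset M} {ρ : ℕ → ℝ}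
    (ho : ∀ j, o ∈ A j) (hρ_nonneg : ∀ j, 0 ≤ ρ j) (hρ_lt : ρ 0 < 1)
    (hρ : Tendsto ρ atTop (𝓝 0)) {ε : ℝ} (hε : 0 < ε) :
    ∃ k, ∃ t : Set M, t.Finite ∧ iInterRelNbhd o A ρ k ⊆ thickening ε t := by
  obtain ⟨R, hR⟩ := (isBounded_iff_subset_closedBall o).1
    (isBounded_relNbhd (ho 0) (A 0).finite_toSet.isBounded hρ_lt)
  have tendsto_zero : Tendsto (fun j => ρ j * (1 + R)) atTop (𝓝 0) := by
    simpa using hρ.mul_const (1 + R)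
  obtain ⟨j, hj⟩ := (tendsto_zero.eventually_lt_const hε).exists
  refine ⟨j + 1, A j, (A j).finite_toSet, fun x hx => ?_⟩
  rw [iInterRelNbhd, mem_iInter₂] at hx
  exact relNbhd_inter_closedBall_subset_thickening ⟨o, ho j⟩ (hρ_nonneg j) hj
    ⟨hx j j.lt_succ_self, hR (hx 0 j.succ_pos)⟩

end RelativeDistance

section Cutoff

variable {M : Type*} [PseudoMetricSpace M] {o : M} {E : Set M} {r : ℝ}

/-- The cutoff function to a relative neighbourhood: it is `1` on `relNbhd o E (r / 2)`, `0` off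
`relNbhd o E r` and linear in `relInfDist o E` in between. Multiplication by it is bounded on
Lipschitz functions vanishing at `o`, with a bound depending only on `r`. -/
def cutoff (o : M) (E : Set M) (r : ℝ) (x : M) : ℝ :=
  max 0 (min 1 (2 - 2 * relInfDist o E x / r))

theorem abs_cutoff_le_one (o : M) (E : Set M) (r : ℝ) (x : M) : |cutoff o E r x| ≤ 1 :=
  abs_le.2 ⟨(by norm_num : (-1 : ℝ) ≤ 0).trans (le_max_left _ _),
    max_le zero_le_one (min_le_left _ _)⟩

theorem cutoff_eq_one (hr : 0 < r) {x : M} (hx : x ∈ relNbhd o E (r / 2)) :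
    cutoff o E r x = 1 := by
  have hx' : relInfDist o E x ≤ r / 2 := hx
  have one_le : 1 ≤ 2 - 2 * relInfDist o E x / r := by
    rw [le_sub_comm, div_le_iff₀ hr]
    linarith
  rw [cutoff, min_eq_left one_le, max_eq_right zero_le_one]

theorem cutoff_eq_one_of_mem (hr : 0 < r) {x : M} (hx : x ∈ E) : cutoff o E r x = 1 :=
  cutoff_eq_one hr ((relInfDist_of_mem hx).trans_le (half_pos hr).le)

theorem support_cutoff_subset (hr : 0 < r) : Function.support (cutoff o E r) ⊆ relNbhd o E r := by
  refine Function.support_subset_iff'.2 fun x hx => max_eq_left ((min_le_right _ _).trans ?_)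
  have hx' : r < relInfDist o E x := not_le.1 hx
  rw [sub_nonpos, le_div_iff₀ hr]
  linarith

theorem support_prod_cutoff_subset {A : ℕ → Finset M} {r : ℕ → ℝ} (hr : ∀ k, 0 < r k) (k : ℕ) :
    Function.support (∏ j ∈ Finset.range k, cutoff o (A j) (r j)) ⊆ iInterRelNbhd o A r k := by
  intro x hx
  rw [Function.mem_support, Finset.prod_apply, Finset.prod_ne_zero_iff] at hx
  exact mem_iInter₂.2 fun j hj => support_cutoff_subset (hr j) (hx j (Finset.mem_range.2 hj))

theorem abs_cutoff_sub_mul_le (ho : o ∈ E) (hr : 0 < r) (x y : M) :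
    |cutoff o E r x - cutoff o E r y| * dist x o ≤ 4 / r * dist x y := by
  have abs_clip_sub_le (a b : ℝ) : |max 0 (min 1 a) - max 0 (min 1 b)| ≤ |a - b| := by
    simpa [Real.dist_eq] using ((LipschitzWith.id.const_min 1).const_max 0).dist_le_mul a b
  calc |cutoff o E r x - cutoff o E r y| * dist x o
      ≤ |(2 - 2 * relInfDist o E x / r) - (2 - 2 * relInfDist o E y / r)| * (1 + dist x o) :=
        mul_le_mul (abs_clip_sub_le _ _) (by linarith) dist_nonneg (abs_nonneg _)
    _ = |-(2 / r * (relInfDist o E x - relInfDist o E y))| * (1 + dist x o) := by ring_nf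
    _ = 2 / r * (|relInfDist o E x - relInfDist o E y| * (1 + dist x o)) := by
        rw [abs_neg, abs_mul, abs_of_pos (by positivity), mul_assoc]
    _ ≤ 2 / r * (2 * dist x y) :=
        mul_le_mul_of_nonneg_left (abs_relInfDist_sub_mul_le ho x y) (by positivity)
    _ = 4 / r * dist x y := by ring

end Cutoff

section LipschitzFree

variable {M : Type*} [MetricSpace M] {o : M} {F : Type*} [NormedAddCommGroup F] [NormedSpace ℝ F]
  {δ : M → F}

theorem IsLipschitzFree.ext_clm (hδ : IsLipschitzFree o δ) {X : Type*} [NormedAddCommGroup X]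
    [NormedSpace ℝ X] {f g : F →L[ℝ] X} (h : ∀ x, f (δ x) = g (δ x)) : f = g :=
  ContinuousLinearMap.ext_on hδ.dense_span (forall_mem_range.2 h)

theorem IsLipschitzFree.lipschitzWith_clm (hδ : IsLipschitzFree o δ) {X : Type*}
    [SeminormedAddCommGroup X] [NormedSpace ℝ X] (f : F →L[ℝ] X) :
    LipschitzWith ‖f‖₊ fun x => f (δ x) :=
  mul_one ‖f‖₊ ▸ f.lipschitz.comp hδ.isometry.lipschitz

theorem IsLipschitzFree.norm_le_of_lipschitzWith (hδ : IsLipschitzFree o δ) {C : NNReal}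
    {f : F →L[ℝ] ℝ} (hf : LipschitzWith C fun x => f (δ x)) : ‖f‖ ≤ C := by
  obtain ⟨g, hg, hgf⟩ := hδ.lift C _ hf (by rw [hδ.map_base, map_zero])
  rwa [hδ.ext_clm fun x => (hgf x).symm]

theorem IsLipschitzFree.exists_clm_extending (hδ : IsLipschitzFree o δ) {X : Type*}
    [NormedAddCommGroup X] [NormedSpace ℝ X] [CompleteSpace X] {C : NNReal} {w : M → X}
    (hw : LipschitzWith C w) (hw0 : w o = 0) :
    ∃ T : F →L[ℝ] X, ‖T‖ ≤ C ∧ ∀ x, T (δ x) = w x := by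
  let e : (M →₀ ℝ) →ₗ[ℝ] F := Finsupp.linearCombination ℝ δ
  let f : (M →₀ ℝ) →ₗ[ℝ] X := Finsupp.linearCombination ℝ w
  have denseRange_e : DenseRange e := by
    rw [DenseRange, ← LinearMap.coe_range, Finsupp.range_linearCombination]
    exact hδ.dense_span
  have norm_le : ∀ a, ‖f a‖ ≤ C * ‖e a‖ := by
    refine fun a => NormedSpace.norm_le_dual_bound ℝ _ (by positivity) fun φ => ?_
    obtain ⟨g, hg, hgw⟩ := hδ.lift (‖φ‖₊ * C) (fun x => φ (w x)) (φ.lipschitz.comp hw)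
      (by rw [hw0, map_zero])
    calc ‖φ (f a)‖ = ‖g (e a)‖ := by
          simp [f, e, Finsupp.linearCombination_apply, Finsupp.sum, hgw]
      _ ≤ ‖φ‖ * C * ‖e a‖ := g.le_of_opNorm_le (by simpa using hg) _
      _ = C * ‖e a‖ * ‖φ‖ := by ring
  refine ⟨f.extendOfNorm e, LinearMap.opNorm_extendOfNorm_le denseRange_e C.2 norm_le,
    fun x => ?_⟩
  simpa [e, f] using LinearMap.extendOfNorm_eq denseRange_e ⟨C, norm_le⟩ (Finsupp.single x 1)

theorem IsLipschitzFree.freeSpan_union_base (hδ : IsLipschitzFree o δ) (S : Set M) :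
    freeSpan δ (S ∪ {o}) = freeSpan δ S := by
  rw [freeSpan, image_union, image_singleton, hδ.map_base, union_singleton,
    Submodule.span_insert_zero, freeSpan]

theorem IsLipschitzFree.isWUC_of_disjoint_support_s11 (hδ : IsLipschitzFree o δ) {C : NNReal}
    {f : ℕ → F →L[ℝ] ℝ} (hf : ∀ n, ‖f n‖ ≤ C)
    (hdisj : Pairwise fun m n =>
      Disjoint (Function.support fun x => f m (δ x)) (Function.support fun x => f n (δ x))) :
    IsWUC f := by
  refine isWUC_of_norm_sum_smul_le_s11 (C := ↑(2 * C)) fun s hs N =>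
    hδ.norm_le_of_lipschitzWith ?_
  have lipschitzWith_smul : ∀ n, LipschitzWith C fun x => s n • f n (δ x) := fun n => by
    refine (hδ.lipschitzWith_clm (s n • f n)).weaken (NNReal.coe_le_coe.1 ?_)
    calc ‖s n • f n‖ = |s n| * ‖f n‖ := norm_smul _ _
      _ ≤ 1 * C := mul_le_mul (hs n) (hf n) (norm_nonneg _) zero_le_one
      _ = C := one_mul _
  have disjoint_support_smul : Pairwise fun m n =>
      Disjoint (Function.support fun x => s m • f m (δ x))
        (Function.support fun x => s n • f n (δ x)) :=
    fun m n hmn => (hdisj hmn).mono (Function.support_const_smul_subset (s m) _)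
      (Function.support_const_smul_subset (s n) _)
  simpa only [FunLike.coe_sum, Finset.sum_apply, FunLike.coe_smul, Pi.smul_apply]
    using lipschitzWith_sum_of_disjoint_support lipschitzWith_smul disjoint_support_smul
      (Finset.range N)

end LipschitzFree

section Multipliers

variable {M : Type*} {F : Type*} [NormedAddCommGroup F] [NormedSpace ℝ F] {δ : M → F}

/-- `T` is the multiplier with weight `h`: the operator on the Lipschitz-free space whose adjoint
is the pointwise multiplication `f ↦ h * f` of Lipschitz functions. -/
def IsMultiplier (δ : M → F) (h : M → ℝ) (T : F →L[ℝ] F) : Prop :=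
  ∀ x, T (δ x) = h x • δ x

theorem isMultiplier_id (δ : M → F) : IsMultiplier δ 1 (.id ℝ F) := fun _ => (one_smul ℝ _).symm

theorem IsMultiplier.comp {g h : M → ℝ} {S T : F →L[ℝ] F} (hS : IsMultiplier δ g S)
    (hT : IsMultiplier δ h T) : IsMultiplier δ (h * g) (S.comp T) := fun x => by
  rw [ContinuousLinearMap.comp_apply, hT, map_smul, hS, smul_smul, Pi.mul_apply]

variable [MetricSpace M] {o : M}

theorem IsLipschitzFree.apply_mem_freeSpan (hδ : IsLipschitzFree o δ) {h : M → ℝ}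
    {T : F →L[ℝ] F} (hT : IsMultiplier δ h T) {S : Set M} (hS : Function.support h ⊆ S) (μ : F) :
    T μ ∈ freeSpan δ S := by
  refine hδ.dense_span.induction (P := fun μ => T μ ∈ freeSpan δ S) (fun μ hμ => ?_)
    ((Submodule.isClosed_topologicalClosure _).preimage T.continuous) μ
  refine (Submodule.span_le (p := (freeSpan δ S).comap T.toLinearMap)).2 ?_ hμ
  rintro _ ⟨x, rfl⟩
  by_cases hx : h x = 0
  · simp [hT x, hx]
  · simpa [hT x] using Submodule.smul_mem _ (h x) (mem_freeSpan δ (hS hx))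

theorem IsLipschitzFree.exists_isMultiplier [CompleteSpace F] (hδ : IsLipschitzFree o δ)
    {h : M → ℝ} (h_le : ∀ x, |h x| ≤ 1) {C : ℝ} (hC : 0 ≤ C)
    (h_lip : ∀ x y, |h x - h y| * dist x o ≤ C * dist x y) :
    ∃ T, IsMultiplier δ h T ∧ ‖T‖ ≤ C + 1 := by
  have lipschitzWith_smul : LipschitzWith (C.toNNReal + 1) fun x => h x • δ x := by
    refine LipschitzWith.of_dist_le_mul fun x y => ?_
    have norm_eq : ‖δ x‖ = dist x o := by
      rw [← hδ.isometry.dist_eq, hδ.map_base, dist_zero_right]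
    calc dist (h x • δ x) (h y • δ y)
        = ‖(h x - h y) • δ x + h y • (δ x - δ y)‖ := by
          rw [dist_eq_norm, sub_smul, smul_sub, sub_add_sub_cancel]
      _ ≤ |h x - h y| * ‖δ x‖ + |h y| * ‖δ x - δ y‖ :=
          (norm_add_le _ _).trans_eq (by rw [norm_smul, norm_smul, Real.norm_eq_abs,
            Real.norm_eq_abs])
      _ ≤ C * dist x y + 1 * dist x y := by
          rw [norm_eq, ← dist_eq_norm, hδ.isometry.dist_eq]
          exact add_le_add (h_lip x y) (mul_le_mul_of_nonneg_right (h_le y) dist_nonneg)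
      _ = ↑(C.toNNReal + 1) * dist x y := by
          rw [NNReal.coe_add, Real.coe_toNNReal _ hC, NNReal.coe_one, add_mul]
  obtain ⟨T, hT, hTδ⟩ := hδ.exists_clm_extending lipschitzWith_smul
    (by rw [hδ.map_base, smul_zero])
  exact ⟨T, hTδ, by simpa [hC] using hT⟩

theorem IsLipschitzFree.exists_isMultiplier_cutoff [CompleteSpace F] (hδ : IsLipschitzFree o δ)
    {E : Set M} (ho : o ∈ E) {r : ℝ} (hr : 0 < r) :
    ∃ T, IsMultiplier δ (cutoff o E r) T ∧ ‖T‖ ≤ 4 / r + 1 :=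
  hδ.exists_isMultiplier (abs_cutoff_le_one o E r) (by positivity) (abs_cutoff_sub_mul_le ho hr)

theorem IsLipschitzFree.exists_isMultiplier_cutoff_norm_sub_lt [CompleteSpace F]
    (hδ : IsLipschitzFree o δ) (μ : F) {r η : ℝ} (hr : 0 < r) (hη : 0 < η) :
    ∃ E : Finset M, o ∈ E ∧ ∃ T, IsMultiplier δ (cutoff o E r) T ∧ ‖T‖ ≤ 4 / r + 1 ∧
      ‖μ - T μ‖ < η := by
  classical
  obtain ⟨γ, hγ, hμγ⟩ := Metric.mem_closure_iff.1 (hδ.dense_span μ) (η / (4 / r + 2))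
    (by positivity)
  obtain ⟨a, rfl⟩ := (Finsupp.mem_span_range_iff_exists_finsupp).1 hγ
  set γ := a.sum fun x c => c • δ x
  have ho : o ∈ insert o a.support := Finset.mem_insert_self _ _
  obtain ⟨T, hT, hT_norm⟩ := hδ.exists_isMultiplier_cutoff (Finset.mem_coe.2 ho) hr
  refine ⟨insert o a.support, ho, T, hT, hT_norm, ?_⟩
  have apply_γ : T γ = γ := by
    simp only [γ, Finsupp.sum, map_sum, map_smul]
    refine Finset.sum_congr rfl fun x hx => ?_
    rw [hT, cutoff_eq_one_of_mem hr (Finset.mem_coe.2 (Finset.mem_insert_of_mem hx)), one_smul]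
  calc ‖μ - T μ‖ = ‖(μ - γ) - T (μ - γ)‖ := by rw [map_sub, apply_γ, sub_sub_sub_cancel_right]
    _ ≤ ‖μ - γ‖ + (4 / r + 1) * ‖μ - γ‖ :=
        (norm_sub_le _ _).trans (add_le_add_right (T.le_of_opNorm_le hT_norm _) _)
    _ = (4 / r + 2) * dist μ γ := by rw [dist_eq_norm]; ring
    _ < η := (lt_div_iff₀' (by positivity)).1 hμγ

end Multipliers

section FreeSpan

variable {M : Type*} [MetricSpace M] {o : M} {F : Type*} [NormedAddCommGroup F] [NormedSpace ℝ F]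
  {δ : M → F}

theorem apply_eq_zero_of_mem_freeSpan {f : F →L[ℝ] ℝ} {S : Set M} (hf : ∀ x ∈ S, f (δ x) = 0)
    {ν : F} (hν : ν ∈ freeSpan δ S) : f ν = 0 :=
  Submodule.topologicalClosure_minimal (t := f.ker) _
    (Submodule.span_le.2 (forall_mem_image.2 hf)) f.isClosed_ker hν

theorem IsLipschitzFree.tendsto_apply_of_norm_le (hδ : IsLipschitzFree o δ)
    {g : ℕ → F →L[ℝ] ℝ} {f : F →L[ℝ] ℝ} {C : ℝ} (hg : ∀ n, ‖g n‖ ≤ C)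
    (h : ∀ x, Tendsto (fun n => g n (δ x)) atTop (𝓝 (f (δ x)))) (ν : F) :
    Tendsto (fun n => g n ν) atTop (𝓝 (f ν)) := by
  have equicontinuous : Equicontinuous fun n => ⇑(g n) :=
    ((NormedSpace.equicontinuous_TFAE g).out 5 1 : (∃ C, ∀ n, ‖g n‖ ≤ C) ↔ _).1 ⟨C, hg⟩
  refine hδ.dense_span.induction (P := fun ν => Tendsto (fun n => g n ν) atTop (𝓝 (f ν)))
    (fun ν hν => ?_) (equicontinuous.isClosed_setOfPred_tendsto f.continuous) ν
  induction hν using Submodule.span_induction with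
  | mem _ hx => obtain ⟨x, rfl⟩ := hx; exact h x
  | zero => simp
  | add _ _ _ _ hx hy => simpa only [map_add] using hx.add hy
  | smul c _ _ hx => simpa only [map_smul] using hx.const_smul c

theorem IsLipschitzFree.exists_soft_threshold (hδ : IsLipschitzFree o δ) (f : F →L[ℝ] ℝ) {t : ℝ}
    (ht : 0 ≤ t) : ∃ g : F →L[ℝ] ℝ, ‖g‖ ≤ 2 * ‖f‖ ∧ (∀ x, |g (δ x) - f (δ x)| ≤ t) ∧
      ∀ x, |f (δ x)| ≤ t → g (δ x) = 0 := by
  have hf := hδ.lipschitzWith_clm f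
  obtain ⟨g, hg, hgf⟩ := hδ.lift (‖f‖₊ + ‖f‖₊) (fun x => f (δ x) - max (-t) (min t (f (δ x))))
    (hf.sub ((hf.const_min t).const_max (-t))) (by simp [hδ.map_base, ht])
  refine ⟨g, by simpa [two_mul] using hg, fun x => ?_, fun x hx => ?_⟩
  · rw [hgf, sub_sub_cancel_left, abs_neg, abs_le]
    exact ⟨le_max_left _ _, max_le (by linarith) (min_le_left _ _)⟩
  · rw [hgf, min_eq_right (abs_le.1 hx).2, max_eq_right (abs_le.1 hx).1, sub_self]

-- A functional vanishing on `K` is a weak-* limit of functionals vanishing near `K`.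
theorem IsLipschitzFree.mem_freeSpan_of_forall_isOpen (hδ : IsLipschitzFree o δ) {K : Set M}
    {ν : F} (h : ∀ U, IsOpen U → K ⊆ U → ν ∈ freeSpan δ (closure U)) : ν ∈ freeSpan δ K := by
  refine mem_submodule_of_forall_dual_eq_zero (Submodule.isClosed_topologicalClosure _)
    fun f hf => ?_
  choose g hg_norm hg_sub hg_zero using fun n : ℕ =>
    hδ.exists_soft_threshold f (t := 1 / ((n : ℝ) + 1)) (by positivity)
  have tendsto_apply := hδ.tendsto_apply_of_norm_le hg_norm (fun x =>
    tendsto_iff_norm_sub_tendsto_zero.2 (squeeze_zero (fun _ => norm_nonneg _)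
      (fun n => hg_sub n x) tendsto_one_div_add_atTop_nhds_zero_nat)) ν
  have continuous_abs : Continuous fun x => |f (δ x)| := (hδ.lipschitzWith_clm f).continuous.abs
  have apply_eq_zero : ∀ n, g n ν = 0 := fun n => by
    refine apply_eq_zero_of_mem_freeSpan (fun x hx => hg_zero n x ?_)
      (h {x | |f (δ x)| < 1 / ((n : ℝ) + 1)} (isOpen_lt continuous_abs continuous_const)
        fun x hx => ?_)
    · exact closure_lt_subset_le continuous_abs continuous_const hx
    · rw [mem_ofPred_eq, hf _ (mem_freeSpan δ hx), abs_zero]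
      positivity
  simp only [apply_eq_zero] at tendsto_apply
  exact tendsto_nhds_unique tendsto_apply tendsto_const_nhds

end FreeSpan

section Localization

variable {M : Type*} [MetricSpace M] {o : M} {F : Type*} [NormedAddCommGroup F] [NormedSpace ℝ F]
  [CompleteSpace F] {δ : M → F} {Γ : Set F}

theorem IsLipschitzFree.exists_support_subset_relNbhd (hδ : IsLipschitzFree o δ)
    (f : F →L[ℝ] ℝ) (μ : F) {r η : ℝ} (hr : 0 < r) (hη : 0 < η) :
    ∃ E : Finset M, o ∈ E ∧ ∃ g : F →L[ℝ] ℝ, ‖g‖ ≤ ‖f‖ * (4 / r + 1) ∧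
      Function.support (fun x => g (δ x)) ⊆
        Function.support (fun x => f (δ x)) ∩ relNbhd o E r ∧ |f μ - g μ| < η := by
  obtain ⟨E, ho, T, hT, hT_norm, hμT⟩ := hδ.exists_isMultiplier_cutoff_norm_sub_lt μ hr
    (show 0 < η / (‖f‖ + 1) by positivity)
  refine ⟨E, ho, f.comp T, (f.opNorm_comp_le T).trans (by gcongr), fun x hx => ?_, ?_⟩
  · have hx' : cutoff o E r x * f (δ x) ≠ 0 := by
      simpa only [Function.mem_support, ContinuousLinearMap.comp_apply, hT x, map_smul,
        smul_eq_mul] using hx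
    exact ⟨right_ne_zero_of_mul hx', support_cutoff_subset hr (left_ne_zero_of_mul hx')⟩
  · calc |f μ - f (T μ)| = |f (μ - T μ)| := by rw [map_sub]
      _ ≤ (‖f‖ + 1) * ‖μ - T μ‖ := f.le_of_opNorm_le (lt_add_one _).le _
      _ < η := (lt_div_iff₀' (by positivity)).1 hμT

theorem IsLipschitzFree.exists_finset_abs_apply_le (hδ : IsLipschitzFree o δ)
    (hΓ : IsVStarSet Γ) {r ε : ℝ} (hr : 0 < r) (hε : 0 < ε) (C : NNReal) :
    ∃ E : Finset M, o ∈ E ∧ ∀ μ ∈ Γ, ∀ f : F →L[ℝ] ℝ, ‖f‖ ≤ C →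
      (∀ x ∈ relNbhd o (E : Set M) r, f (δ x) = 0) → |f μ| ≤ ε := by
  classical
  by_contra! hcon
  let supp (g : F →L[ℝ] ℝ) : Set M := Function.support fun x => g (δ x)
  let IsBump (g : F →L[ℝ] ℝ) : Prop := ‖g‖ ≤ C * (4 / r + 1) ∧
    (∃ E : Finset M, o ∈ E ∧ supp g ⊆ relNbhd o E r) ∧ ∃ μ ∈ Γ, ε / 2 < |g μ|
  have exists_disjoint_bump : ∀ s : Finset (F →L[ℝ] ℝ), (∀ g ∈ s, IsBump g) →
      ∃ g, IsBump g ∧ ∀ g' ∈ s, Disjoint (supp g') (supp g) := by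
    intro s hs
    choose! E ho hE using fun g hg => (hs g hg).2.1
    obtain ⟨μ, hμ, f, hf, hf_zero, hfμ⟩ := hcon (insert o (s.biUnion E)) (Finset.mem_insert_self ..)
    obtain ⟨E', ho', g, hg, hgE', hfg⟩ := hδ.exists_support_subset_relNbhd f μ hr (half_pos hε)
    refine ⟨g, ⟨hg.trans (by gcongr), ⟨E', ho', hgE'.trans inter_subset_right⟩, μ, hμ, ?_⟩,
      fun g' hg' => ?_⟩
    · linarith [abs_sub_abs_le_abs_sub (f μ) (g μ)]
    · refine disjoint_left.2 fun x hx hxg => (hgE' hxg).1 (hf_zero x ?_)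
      refine relNbhd_mono ⟨o, ho g' hg'⟩ (Finset.coe_subset.2 ?_) r (hE g' hg' hx)
      exact (Finset.subset_biUnion_of_mem E hg').trans (Finset.subset_insert _ _)
  have : Std.Symm fun g g' : F →L[ℝ] ℝ => Disjoint (supp g) (supp g') := ⟨fun _ _ h => h.symm⟩
  obtain ⟨g, hg, hg_disj⟩ := exists_seq_of_forall_finset_exists' IsBump
    (fun g g' => Disjoint (supp g) (supp g')) exists_disjoint_bump
  have isWUC : IsWUC g := hδ.isWUC_of_disjoint_support_s11 (C := C * (4 / r + 1).toNNReal)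
    (fun n => (hg n).1.trans_eq (by
      rw [NNReal.coe_mul, Real.coe_toNNReal _ (by positivity)])) hg_disj
  obtain ⟨n, hn⟩ := (hΓ g isWUC (ε / 2) (half_pos hε)).exists
  obtain ⟨μ, hμ, hgμ⟩ := (hg n).2.2
  exact hgμ.not_ge (hn μ hμ)

theorem IsLipschitzFree.exists_isMultiplier_cutoff_norm_sub_le (hδ : IsLipschitzFree o δ)
    (hΓ : IsVStarSet Γ) {r ε : ℝ} (hr : 0 < r) (hε : 0 < ε) :
    ∃ E : Finset M, o ∈ E ∧ ∃ T, IsMultiplier δ (cutoff o E r) T ∧ ∀ μ ∈ Γ, ‖μ - T μ‖ ≤ ε := by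
  obtain ⟨E, ho, hE⟩ := hδ.exists_finset_abs_apply_le hΓ (half_pos hr) hε
    (1 + (4 / r + 1).toNNReal)
  obtain ⟨T, hT, hT_norm⟩ := hδ.exists_isMultiplier_cutoff (Finset.mem_coe.2 ho) hr
  refine ⟨E, ho, T, hT, fun μ hμ => ?_⟩
  obtain ⟨φ, hφ, hφμ⟩ := exists_dual_vector'' ℝ (μ - T μ)
  have norm_le : ‖φ - φ.comp T‖ ≤ 1 + (4 / r + 1) :=
    calc ‖φ - φ.comp T‖ ≤ ‖φ‖ + ‖φ‖ * ‖T‖ :=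
          (norm_sub_le _ _).trans (add_le_add_right (φ.opNorm_comp_le T) _)
      _ ≤ 1 + 1 * (4 / r + 1) := by gcongr
      _ = 1 + (4 / r + 1) := by rw [one_mul]
  calc ‖μ - T μ‖ = |(φ - φ.comp T) μ| := by
        rw [sub_apply, ContinuousLinearMap.comp_apply, ← map_sub, hφμ]
        exact (abs_of_nonneg (norm_nonneg _)).symm
    _ ≤ ε := by
        refine hE μ hμ _ (norm_le.trans_eq ?_) fun x hx => ?_
        · rw [NNReal.coe_add, Real.coe_toNNReal _ (by positivity), NNReal.coe_one]
        · simp [hT x, cutoff_eq_one hr hx]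

theorem IsLipschitzFree.exists_seq_isMultiplier_cutoff (hδ : IsLipschitzFree o δ)
    (hΓ : IsVStarSet Γ) {r ε : ℕ → ℝ} (hr : ∀ k, 0 < r k) (hε : ∀ k, 0 < ε k) :
    ∃ (A : ℕ → Finset M) (T : ℕ → F →L[ℝ] F), (∀ k, o ∈ A k) ∧ T 0 = .id ℝ F ∧
      (∀ k, IsMultiplier δ (∏ j ∈ Finset.range k, cutoff o (A j) (r j)) (T k)) ∧
      ∀ μ ∈ Γ, ∀ k, dist (T k μ) (T (k + 1) μ) ≤ ε k := by
  choose E ho S hS hS_sub using fun (k : ℕ) (T : F →L[ℝ] F) =>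
    hδ.exists_isMultiplier_cutoff_norm_sub_le (hΓ.image_clm T) (hr k) (hε k)
  let T : ℕ → F →L[ℝ] F := fun k => Nat.rec (.id ℝ F) (fun k T => (S k T).comp T) k
  refine ⟨fun k => E k (T k), T, fun k => ho k (T k), rfl, fun k => ?_, fun μ hμ k => ?_⟩
  · induction k with
    | zero => exact isMultiplier_id δ
    | succ k ih => exact Finset.prod_range_succ (M := M → ℝ) _ _ ▸ (hS k (T k)).comp ih
  · rw [dist_eq_norm]
    exact hS_sub k (T k) _ (mem_image_of_mem _ hμ)

theorem IsLipschitzFree.exists_isCompact_subset_thickening [CompleteSpace M]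
    (hδ : IsLipschitzFree o δ) (hΓ : IsVStarSet Γ) {ε : ℝ} (hε : 0 < ε) :
    ∃ (K : Set M) (Γ' : Set F), IsCompact K ∧ Γ' ⊆ freeSpan δ K ∧
      (∀ U, IsOpen U → K ⊆ U → IsVStarSetWithin Γ' (freeSpan δ (closure U))) ∧
      Γ ⊆ thickening ε Γ' := by
  let r (k : ℕ) : ℝ := (1 / 2) ^ (k + 1)
  have r_pos : ∀ k, 0 < r k := fun k => by positivity
  have tendsto_r : Tendsto r atTop (𝓝 0) :=
    (tendsto_pow_atTop_nhds_zero_of_lt_one (by norm_num) (by norm_num)).comp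
      (tendsto_add_atTop_nat 1)
  obtain ⟨A, T, ho, hT_zero, hT, hT_dist⟩ := hδ.exists_seq_isMultiplier_cutoff hΓ r_pos
    (ε := fun k => ε / 2 / 2 / 2 ^ k) fun k => by positivity
  obtain ⟨τ, hτ, hτ_dist⟩ := exists_tendstoUniformlyOn_of_dist_le_geometric_two
    (f := fun k => ⇑(T k)) hT_dist
  have subset_thickening : ∀ η > 0, ∃ k, ∃ t : Set M, t.Finite ∧
      iInterRelNbhd o A r k ⊆ thickening η t := fun η hη =>
    exists_iInterRelNbhd_subset_thickening ho (fun k => (r_pos k).le) (by norm_num [r])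
      tendsto_r hη
  have isVStarSetWithin : ∀ U, IsOpen U → (⋂ k, iInterRelNbhd o A r k) ⊆ U →
      IsVStarSetWithin (τ '' Γ) (freeSpan δ (closure U)) := by
    intro U hU hKU
    obtain ⟨k, hk⟩ := exists_subset_of_iInter_subset_of_isOpen (antitone_iInterRelNbhd o A r)
      (isClosed_iInterRelNbhd o A r) subset_thickening hU hKU
    refine hΓ.isVStarSetWithin_image_of_tendstoUniformlyOn
      (Submodule.isClosed_topologicalClosure _) hτ ?_
    filter_upwards [eventually_ge_atTop k] with l hl x
    exact hδ.apply_mem_freeSpan (hT l) (((support_prod_cutoff_subset r_pos l).trans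
      (antitone_iInterRelNbhd o A r hl)).trans (hk.trans subset_closure)) x
  refine ⟨⋂ k, iInterRelNbhd o A r k, τ '' Γ,
    isCompact_iInter_of_subset_thickening (isClosed_iInterRelNbhd o A r) subset_thickening,
    fun ν hν => hδ.mem_freeSpan_of_forall_isOpen fun U hU hKU => (isVStarSetWithin U hU hKU).1 hν,
    isVStarSetWithin, fun μ hμ => mem_thickening_iff.2 ⟨τ μ, mem_image_of_mem τ hμ, ?_⟩⟩
  simpa [hT_zero] using (hτ_dist μ hμ).trans_lt (half_lt_self hε)

end Localization

/-- Suppose that for every compact `K ⊆ M` and every `Γ ⊆ F(K)`, if `Γ` is a (V*)-set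
with respect to `F(cl(U))` for every open `U ⊇ K`, then `Γ` is a (V*)-set with respect to
`F(L)` for some compact `L ⊇ K`.  Then property (V*) is compactly determined for `F(M)`:
if `F(K ∪ {0})` has property (V*) for every compact `K ⊆ M`, then `F(M)` has
property (V*). -/
theorem propertyVStar_compactlyDetermined_of_vStar_localization
    {M : Type*} [MetricSpace M] [CompleteSpace M] (o : M)
    {F : Type*} [NormedAddCommGroup F] [NormedSpace ℝ F] [CompleteSpace F]
    (δ : M → F) (hδ : IsLipschitzFree o δ)
    (hcond : ∀ K : Set M, IsCompact K → ∀ Γ : Set F,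
      Γ ⊆ (freeSpan δ (K ∪ {o}) : Set F) →
      (∀ U : Set M, IsOpen U → K ⊆ U →
        IsVStarSetWithin Γ (freeSpan δ (closure U ∪ {o}))) →
      ∃ L : Set M, IsCompact L ∧ K ⊆ L ∧
        IsVStarSetWithin Γ (freeSpan δ (L ∪ {o})))
    (hcpt : ∀ K : Set M, IsCompact K → HasPropertyVStar ↥(freeSpan δ (K ∪ {o}))) :
    HasPropertyVStar F := by
  intro Γ hΓ
  simp only [hδ.freeSpan_union_base] at hcond
  refine relWeaklyCompact_of_forall_subset_thickening fun ε hε => ?_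
  obtain ⟨K, Γ', hK, hΓ'K, hΓ'U, hΓΓ'⟩ := hδ.exists_isCompact_subset_thickening hΓ hε
  obtain ⟨L, hL, -, hΓ'L⟩ := hcond K hK Γ' hΓ'K hΓ'U
  exact ⟨Γ', hΓ'L.relWeaklyCompact (hδ.freeSpan_union_base L ▸ hcpt L hL), hΓΓ'⟩
end
end
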